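/- arXiv:math-ph/0005013 — 11 statements merged into one kernel-verified Lean document; each statement's English description precedes it below -/
import Mathlib

section
/- The three vector fields Q₁(t,x,u) = (0, 1, 0), Q₂(t,x,u) = (0, tan u · sin x, cos x), Q₃(t,x,u) = (0, tan u · cos x, −sin x) on ℝ³ satisfy the so(3) commutation relations at every point p = (t,x,u) with cos u ≠ 0: [Q₁,Q₂](p) = Q₃(p), [Q₁,Q₃](p) = −Q₂(p), and [Q₂,Q₃](p) = Q₁(p). -/
/-- Pointwise Lie bracket of vector fields on ℝ³:
`[V,W](p) = DW(p)(V(p)) − DV(p)(W(p))`. -/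
noncomputable def lieBracket (V W : ℝ × ℝ × ℝ → ℝ × ℝ × ℝ) (p : ℝ × ℝ × ℝ) :
    ℝ × ℝ × ℝ :=
  fderiv ℝ W p (V p) - fderiv ℝ V p (W p)

/-!
`Q₂` and `Q₃` are the fields `X_f = tan u f(x) ∂x + f'(x) ∂u` for `f = sin` and `f = cos`.
Bracketing with `Q₁ = ∂x` differentiates the generating function: `[∂x, X_f] = X_{f'}`. In
`[X_f, X_g]` the `∂u` component cancels because `f'' = -f` and `g'' = -g`, while the Riccati
equation `tan' = 1 + tan²` leaves the Wronskian `f' g - f g'` as the `∂x` component; for `sin` and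
`cos` it equals `1`.
-/

/-- The vector field `h(u) f(x) ∂x + g(x) ∂u`, written in the coordinates `(t, x, u)`. When
`h = -φ'/φ` and `g = f'`, this is the form of a Killing field of the warped metric
`du² + φ(u)² dx²`; the round sphere is `φ = cos`, `h = tan`. -/
def warpedField (h f g : ℝ → ℝ) (p : ℝ × ℝ × ℝ) : ℝ × ℝ × ℝ :=
  (0, h p.2.2 * f p.2.1, g p.2.1)

theorem neg_warpedField (h f g : ℝ → ℝ) (p : ℝ × ℝ × ℝ) :
    -warpedField h f g p = warpedField h (-f) (-g) p := by
  simp [warpedField]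

theorem hasDerivAt_tan_one_add_tan_sq {u : ℝ} (hu : Real.cos u ≠ 0) :
    HasDerivAt Real.tan (1 + Real.tan u ^ 2) u := by
  have hsec : 1 / Real.cos u ^ 2 = 1 + Real.tan u ^ 2 := by
    rw [← Real.inv_one_add_tan_sq hu, one_div, inv_inv]
  exact hsec ▸ Real.hasDerivAt_tan hu

theorem lieBracket_const_left (c : ℝ × ℝ × ℝ) (W : ℝ × ℝ × ℝ → ℝ × ℝ × ℝ) (p : ℝ × ℝ × ℝ) :
    lieBracket (fun _ ↦ c) W p = fderiv ℝ W p c := by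
  simp [lieBracket]

section WarpedField

variable {h f g : ℝ → ℝ} {p : ℝ × ℝ × ℝ}

theorem fderiv_warpedField_apply {h' f' g' : ℝ} (hh : HasDerivAt h h' p.2.2)
    (hf : HasDerivAt f f' p.2.1) (hg : HasDerivAt g g' p.2.1) (v : ℝ × ℝ × ℝ) :
    fderiv ℝ (warpedField h f g) p v =
      (0, h p.2.2 * (f' * v.2.1) + f p.2.1 * (h' * v.2.2), g' * v.2.1) := by
  have hxu : HasFDerivAt Prod.snd (ContinuousLinearMap.snd ℝ ℝ (ℝ × ℝ)) p := hasFDerivAt_snd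
  have hfx := hf.comp_hasFDerivAt p hxu.fst
  have hgx := hg.comp_hasFDerivAt p hxu.fst
  have hhu := hh.comp_hasFDerivAt p hxu.snd
  have hfield := (hasFDerivAt_const (0 : ℝ) p).prodMk ((hhu.mul hfx).prodMk hgx)
  exact congrArg (fun L ↦ L v) hfield.fderiv

theorem lieBracket_dx_warpedField {f' g' : ℝ → ℝ} (hh : DifferentiableAt ℝ h p.2.2)
    (hf : HasDerivAt f (f' p.2.1) p.2.1) (hg : HasDerivAt g (g' p.2.1) p.2.1) :
    lieBracket (fun _ ↦ (0, 1, 0)) (warpedField h f g) p = warpedField h f' g' p := by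
  rw [lieBracket_const_left, fderiv_warpedField_apply hh.hasDerivAt hf hg]
  simp [warpedField]

theorem lieBracket_warpedField {f' g' : ℝ → ℝ} {h' f'' g'' : ℝ} (hh : HasDerivAt h h' p.2.2)
    (hf : HasDerivAt f (f' p.2.1) p.2.1) (hf' : HasDerivAt f' f'' p.2.1)
    (hg : HasDerivAt g (g' p.2.1) p.2.1) (hg' : HasDerivAt g' g'' p.2.1) :
    lieBracket (warpedField h f f') (warpedField h g g') p =
      (0, (h' - h p.2.2 ^ 2) * (f' p.2.1 * g p.2.1 - f p.2.1 * g' p.2.1),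
        h p.2.2 * (f p.2.1 * g'' - f'' * g p.2.1)) := by
  rw [lieBracket, fderiv_warpedField_apply hh hf hf', fderiv_warpedField_apply hh hg hg']
  simp only [warpedField, Prod.mk_sub_mk, Prod.mk.injEq]
  refine ⟨?_, ?_, ?_⟩ <;> ring

/-- For `h = -φ'/φ` one has `h' = -φ''/φ + h²`, so `K` is the Gaussian curvature of
`du² + φ(u)² dx²`. -/
theorem lieBracket_warpedField_of_riccati {f' g' : ℝ → ℝ} {K c : ℝ}
    (hh : HasDerivAt h (K + h p.2.2 ^ 2) p.2.2)
    (hf : HasDerivAt f (f' p.2.1) p.2.1) (hf' : HasDerivAt f' (c * f p.2.1) p.2.1)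
    (hg : HasDerivAt g (g' p.2.1) p.2.1) (hg' : HasDerivAt g' (c * g p.2.1) p.2.1) :
    lieBracket (warpedField h f f') (warpedField h g g') p =
      (0, K * (f' p.2.1 * g p.2.1 - f p.2.1 * g' p.2.1), 0) := by
  rw [lieBracket_warpedField hh hf hf' hg hg', Prod.mk.injEq, Prod.mk.injEq]
  refine ⟨rfl, ?_, ?_⟩ <;> ring

end WarpedField

/-- The realization of so(3):
`Q₁ = ∂x`, `Q₂ = tan u sin x ∂x + cos x ∂u`, `Q₃ = tan u cos x ∂x − sin x ∂u`
(coordinates `(t,x,u)`). -/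
theorem so3_commutation_relations
    (Q₁ Q₂ Q₃ : ℝ × ℝ × ℝ → ℝ × ℝ × ℝ)
    (hQ₁ : ∀ p : ℝ × ℝ × ℝ, Q₁ p = (0, 1, 0))
    (hQ₂ : ∀ p : ℝ × ℝ × ℝ,
      Q₂ p = (0, Real.tan p.2.2 * Real.sin p.2.1, Real.cos p.2.1))
    (hQ₃ : ∀ p : ℝ × ℝ × ℝ,
      Q₃ p = (0, Real.tan p.2.2 * Real.cos p.2.1, -Real.sin p.2.1)) :
    ∀ p : ℝ × ℝ × ℝ, Real.cos p.2.2 ≠ 0 →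
      lieBracket Q₁ Q₂ p = Q₃ p ∧
      lieBracket Q₁ Q₃ p = -(Q₂ p) ∧
      lieBracket Q₂ Q₃ p = Q₁ p := by
  intro p hp
  obtain rfl : Q₁ = fun _ ↦ (0, 1, 0) := funext hQ₁
  obtain rfl : Q₂ = warpedField Real.tan Real.sin Real.cos := funext hQ₂
  obtain rfl : Q₃ = warpedField Real.tan Real.cos (-Real.sin) := funext hQ₃
  have htan := hasDerivAt_tan_one_add_tan_sq hp
  have hsin := Real.hasDerivAt_sin p.2.1
  have hcos : HasDerivAt Real.cos ((-Real.sin) p.2.1) p.2.1 := Real.hasDerivAt_cos p.2.1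
  have hsin_neg : HasDerivAt (-Real.sin) ((-Real.cos) p.2.1) p.2.1 := hsin.neg
  refine ⟨lieBracket_dx_warpedField htan.differentiableAt hsin hcos, ?_, ?_⟩
  · rw [neg_warpedField]
    exact lieBracket_dx_warpedField htan.differentiableAt hcos hsin_neg
  · have hsin'' : HasDerivAt Real.cos (-1 * Real.sin p.2.1) p.2.1 := by simpa using hcos
    have hcos'' : HasDerivAt (-Real.sin) (-1 * Real.cos p.2.1) p.2.1 := by simpa using hsin_neg
    have wronskian : Real.cos p.2.1 * Real.cos p.2.1 - Real.sin p.2.1 * (-Real.sin) p.2.1 = 1 := by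
      rw [Pi.neg_apply]
      linear_combination Real.sin_sq_add_cos_sq p.2.1
    rw [lieBracket_warpedField_of_riccati htan hsin hsin'' hcos hcos'', wronskian, mul_one]
end

section
/- The three vector fields Q₁(t,x,u) = (0, 2x, −u), Q₂(t,x,u) = (0, u⁻⁴ − x², x·u), Q₃(t,x,u) = (0, 1, 0) satisfy the sl(2,ℝ) commutation relations at every point p = (t,x,u) with u ≠ 0: [Q₁,Q₂](p) = 2·Q₂(p), [Q₁,Q₃](p) = −2·Q₃(p), and [Q₂,Q₃](p) = Q₁(p). -/
/-!
Let `Y` be a vector field and `f` a function in the variable `u` alone. For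
`H = 2x∂ₓ - Y`, `E = (f - x²)∂ₓ + xY`, `F = ∂ₓ` the relations `[H, F] = -2F` and `[E, F] = H`
only express how the coefficients depend on `x`, while `[H, E] - 2E = -(Yf + 4f)∂ₓ`. So the triple
spans `sl(2)` as soon as `Yf = -4f`, which by Euler's identity holds for `Y = u∂ᵤ` and `f = u⁻⁴`.
-/

theorem fderiv_zpow_apply_self {𝕜 : Type*} [NontriviallyNormedField 𝕜] (m : ℤ) {u : 𝕜}
    (hu : u ≠ 0) :
    fderiv 𝕜 (fun v ↦ v ^ m) u u = m * u ^ m := by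
  rw [fderiv_eq_smul_deriv, deriv_zpow, smul_eq_mul, mul_left_comm, ← zpow_one_add₀ hu,
    add_sub_cancel]

section Sl2Triple

variable {𝕜 T U : Type*} [NontriviallyNormedField 𝕜]
  [NormedAddCommGroup T] [NormedSpace 𝕜 T] [NormedAddCommGroup U] [NormedSpace 𝕜 U]

/-- The neutral element `2x∂ₓ - Y` of an `sl(2)` triple of vector fields in the variables
`(t, x, u)`, for a vector field `Y` in `u`; the variable `t` is a passive parameter. -/
def sl2FieldH (Y : U → U) (p : T × 𝕜 × U) : T × 𝕜 × U :=
  (0, 2 * p.2.1, -Y p.2.2)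

/-- The raising element `(f - x²)∂ₓ + xY` of an `sl(2)` triple of vector fields in the variables
`(t, x, u)`, for a function `f` and a vector field `Y` in `u`. -/
def sl2FieldE (f : U → 𝕜) (Y : U → U) (p : T × 𝕜 × U) : T × 𝕜 × U :=
  (0, f p.2.2 - p.2.1 ^ 2, p.2.1 • Y p.2.2)

/-- The lowering element `∂ₓ` of an `sl(2)` triple of vector fields in the variables
`(t, x, u)`. -/
def sl2FieldF (_ : T × 𝕜 × U) : T × 𝕜 × U :=
  (0, 1, 0)

variable {f : U → 𝕜} {Y : U → U} {p : T × 𝕜 × U}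

theorem fderiv_sl2FieldH_apply (hY : DifferentiableAt 𝕜 Y p.2.2) (v : T × 𝕜 × U) :
    fderiv 𝕜 (sl2FieldH Y) p v = (0, 2 * v.2.1, -fderiv 𝕜 Y p.2.2 v.2.2) := by
  have hxu : HasFDerivAt Prod.snd (.snd 𝕜 T (𝕜 × U)) p := hasFDerivAt_snd
  have hYu := hY.hasFDerivAt.comp p hxu.snd
  have h : HasFDerivAt (sl2FieldH Y) _ p :=
    (hasFDerivAt_const (0 : T) p).prodMk ((hxu.fst.const_mul 2).prodMk hYu.neg)
  simp [h.fderiv]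

theorem fderiv_sl2FieldE_apply (hf : DifferentiableAt 𝕜 f p.2.2)
    (hY : DifferentiableAt 𝕜 Y p.2.2) (v : T × 𝕜 × U) :
    fderiv 𝕜 (sl2FieldE f Y) p v =
      (0, fderiv 𝕜 f p.2.2 v.2.2 - 2 * p.2.1 * v.2.1,
        p.2.1 • fderiv 𝕜 Y p.2.2 v.2.2 + v.2.1 • Y p.2.2) := by
  have hxu : HasFDerivAt Prod.snd (.snd 𝕜 T (𝕜 × U)) p := hasFDerivAt_snd
  have hfu := hf.hasFDerivAt.comp p hxu.snd
  have hYu := hY.hasFDerivAt.comp p hxu.snd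
  have h : HasFDerivAt (sl2FieldE f Y) _ p :=
    (hasFDerivAt_const (0 : T) p).prodMk ((hfu.sub (hxu.fst.pow 2)).prodMk (hxu.fst.smul hYu))
  simp [h.fderiv]

theorem fderiv_sl2FieldF : fderiv 𝕜 sl2FieldF p = 0 :=
  fderiv_const_apply _

theorem lieBracket_sl2FieldH_sl2FieldE (hf : DifferentiableAt 𝕜 f p.2.2)
    (hY : DifferentiableAt 𝕜 Y p.2.2) (hYf : fderiv 𝕜 f p.2.2 (Y p.2.2) = -4 * f p.2.2) :
    VectorField.lieBracket 𝕜 (sl2FieldH Y) (sl2FieldE f Y) p = (2 : 𝕜) • sl2FieldE f Y p := by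
  rw [VectorField.lieBracket, fderiv_sl2FieldE_apply hf hY, fderiv_sl2FieldH_apply hY]
  simp only [sl2FieldH, sl2FieldE, map_neg, map_smul, hYf, Prod.mk_sub_mk, Prod.smul_mk,
    smul_eq_mul, Prod.mk.injEq]
  refine ⟨by simp, by ring, by module⟩

theorem lieBracket_sl2FieldH_sl2FieldF (hY : DifferentiableAt 𝕜 Y p.2.2) :
    VectorField.lieBracket 𝕜 (sl2FieldH Y) sl2FieldF p = (-2 : 𝕜) • sl2FieldF p := by
  simp [VectorField.lieBracket, fderiv_sl2FieldH_apply hY, fderiv_sl2FieldF, sl2FieldF]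

theorem lieBracket_sl2FieldE_sl2FieldF (hf : DifferentiableAt 𝕜 f p.2.2)
    (hY : DifferentiableAt 𝕜 Y p.2.2) :
    VectorField.lieBracket 𝕜 (sl2FieldE f Y) sl2FieldF p = sl2FieldH Y p := by
  simp [VectorField.lieBracket, fderiv_sl2FieldE_apply hf hY, fderiv_sl2FieldF, sl2FieldF,
    sl2FieldH]

theorem sl2_commutation_relations_realization_n23_general (hf : DifferentiableAt 𝕜 f p.2.2)
    (hY : DifferentiableAt 𝕜 Y p.2.2) (hYf : fderiv 𝕜 f p.2.2 (Y p.2.2) = -4 * f p.2.2) :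
    VectorField.lieBracket 𝕜 (sl2FieldH Y) (sl2FieldE f Y) p = (2 : 𝕜) • sl2FieldE f Y p ∧
      VectorField.lieBracket 𝕜 (sl2FieldH Y) sl2FieldF p = (-2 : 𝕜) • sl2FieldF p ∧
      VectorField.lieBracket 𝕜 (sl2FieldE f Y) sl2FieldF p = sl2FieldH Y p :=
  ⟨lieBracket_sl2FieldH_sl2FieldE hf hY hYf, lieBracket_sl2FieldH_sl2FieldF hY,
    lieBracket_sl2FieldE_sl2FieldF hf hY⟩

end Sl2Triple

/-- The realization of sl(2,ℝ):
`Q₁ = 2x∂x − u∂u`, `Q₂ = (u⁻⁴ − x²)∂x + xu∂u`, `Q₃ = ∂x`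
(coordinates `(t,x,u)`), valid where `u ≠ 0`. -/
theorem sl2_commutation_relations_realization_n23
    (Q₁ Q₂ Q₃ : ℝ × ℝ × ℝ → ℝ × ℝ × ℝ)
    (hQ₁ : ∀ p : ℝ × ℝ × ℝ, Q₁ p = (0, 2 * p.2.1, -p.2.2))
    (hQ₂ : ∀ p : ℝ × ℝ × ℝ,
      Q₂ p = (0, p.2.2 ^ (-4 : ℤ) - p.2.1 ^ 2, p.2.1 * p.2.2))
    (hQ₃ : ∀ p : ℝ × ℝ × ℝ, Q₃ p = (0, 1, 0)) :
    ∀ p : ℝ × ℝ × ℝ, p.2.2 ≠ 0 →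
      lieBracket Q₁ Q₂ p = (2 : ℝ) • Q₂ p ∧
      lieBracket Q₁ Q₃ p = (-2 : ℝ) • Q₃ p ∧
      lieBracket Q₂ Q₃ p = Q₁ p := by
  obtain rfl : Q₁ = sl2FieldH id := funext hQ₁
  obtain rfl : Q₂ = sl2FieldE (fun u ↦ u ^ (-4 : ℤ)) id := funext hQ₂
  obtain rfl : Q₃ = sl2FieldF := funext hQ₃
  intro p hp
  exact sl2_commutation_relations_realization_n23_general
    (differentiableAt_zpow.2 (.inl hp)) differentiableAt_id
    (mod_cast fderiv_zpow_apply_self (-4) hp)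
end

section
/- The three vector fields Q₁(t,x,u) = (0, 2x, −u), Q₂(t,x,u) = (0, −(u⁻⁴ + x²), x·u), Q₃(t,x,u) = (0, 1, 0) satisfy the sl(2,ℝ) commutation relations at every point p = (t,x,u) with u ≠ 0: [Q₁,Q₂](p) = 2·Q₂(p), [Q₁,Q₃](p) = −2·Q₃(p), and [Q₂,Q₃](p) = Q₁(p). -/
/-!
Since `Q₁` is linear and `Q₃` is constant, only the derivative of `Q₂` has to be computed. The
coefficient `u⁻⁴` of `Q₂` may be any function `f(u)`: it does not contribute to `[Q₂, Q₃] = Q₁`,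
and `[Q₁, Q₂] = 2 Q₂` reduces to Euler's identity `u f'(u) = -4 f(u)` for homogeneity of degree
`-4`.
-/

theorem lieBracket_eq_vectorFieldLieBracket (V W : ℝ × ℝ × ℝ → ℝ × ℝ × ℝ) :
    lieBracket V W = VectorField.lieBracket ℝ V W :=
  rfl

section General

variable {𝕜 : Type*} [NontriviallyNormedField 𝕜]
  {E : Type*} [NormedAddCommGroup E] [NormedSpace 𝕜 E]

theorem vectorFieldLieBracket_const_right (V : E → E) (c x : E) :
    VectorField.lieBracket 𝕜 V (fun _ ↦ c) x = -fderiv 𝕜 V x c := by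
  simp [VectorField.lieBracket]

theorem vectorFieldLieBracket_clm_left (L : E →L[𝕜] E) (W : E → E) (x : E) :
    VectorField.lieBracket 𝕜 L W x = fderiv 𝕜 W x (L x) - L (W x) := by
  simp [VectorField.lieBracket]

end General

section SL2

variable {𝕜 : Type*} [NontriviallyNormedField 𝕜]

variable (𝕜) in
/-- The field `Q₁ = 2x∂x − u∂u`, in the role of the Cartan element of `sl(2)`. It is linear, and
is encoded as a continuous linear map in order to be its own derivative. -/
def weightField : 𝕜 × 𝕜 × 𝕜 →L[𝕜] 𝕜 × 𝕜 × 𝕜 where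
  toFun p := (0, 2 * p.2.1, -p.2.2)
  map_add' p q := by ext <;> simp [mul_add, add_comm]
  map_smul' c p := by ext <;> simp [mul_left_comm]
  cont := by fun_prop

/-- The field `−(f(u) + x²)∂x + xu∂u`, in the role of the raising element of `sl(2)`; the choice
`f(u) = u⁻⁴` gives `Q₂`. -/
def raisingField (f : 𝕜 → 𝕜) (p : 𝕜 × 𝕜 × 𝕜) : 𝕜 × 𝕜 × 𝕜 :=
  (0, -(f p.2.2 + p.2.1 ^ 2), p.2.1 * p.2.2)

variable (𝕜) in
/-- The field `Q₃ = ∂x`, in the role of the lowering element of `sl(2)`. -/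
def loweringField : 𝕜 × 𝕜 × 𝕜 → 𝕜 × 𝕜 × 𝕜 :=
  fun _ ↦ (0, 1, 0)

theorem weightField_apply (p : 𝕜 × 𝕜 × 𝕜) : weightField 𝕜 p = (0, 2 * p.2.1, -p.2.2) :=
  rfl

theorem fderiv_raisingField_apply {f : 𝕜 → 𝕜} {p : 𝕜 × 𝕜 × 𝕜}
    (hf : DifferentiableAt 𝕜 f p.2.2) (v : 𝕜 × 𝕜 × 𝕜) :
    fderiv 𝕜 (raisingField f) p v =
      (0, -(deriv f p.2.2 * v.2.2 + 2 * p.2.1 * v.2.1), p.2.1 * v.2.2 + p.2.2 * v.2.1) := by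
  have hx : HasFDerivAt (fun q : 𝕜 × 𝕜 × 𝕜 ↦ q.2.1) _ p := (hasFDerivAt_snd (𝕜 := 𝕜) (p := p)).fst
  have hu : HasFDerivAt (fun q : 𝕜 × 𝕜 × 𝕜 ↦ q.2.2) _ p := (hasFDerivAt_snd (𝕜 := 𝕜) (p := p)).snd
  have hfu : HasFDerivAt (fun q : 𝕜 × 𝕜 × 𝕜 ↦ f q.2.2) _ p := hf.hasDerivAt.comp_hasFDerivAt p hu
  have hQ : HasFDerivAt (raisingField f) _ p :=
    (hasFDerivAt_const 0 p).prodMk ((hfu.add (hx.pow 2)).neg.prodMk (hx.mul hu))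
  rw [hQ.fderiv]
  simp

theorem vectorFieldLieBracket_weightField_loweringField (p : 𝕜 × 𝕜 × 𝕜) :
    VectorField.lieBracket 𝕜 (weightField 𝕜) (loweringField 𝕜) p =
      (-2 : 𝕜) • loweringField 𝕜 p := by
  unfold loweringField
  rw [vectorFieldLieBracket_const_right, ContinuousLinearMap.fderiv, weightField_apply]
  simp

theorem vectorFieldLieBracket_raisingField_loweringField {f : 𝕜 → 𝕜} {p : 𝕜 × 𝕜 × 𝕜}
    (hf : DifferentiableAt 𝕜 f p.2.2) :
    VectorField.lieBracket 𝕜 (raisingField f) (loweringField 𝕜) p = weightField 𝕜 p := by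
  unfold loweringField
  rw [vectorFieldLieBracket_const_right, fderiv_raisingField_apply hf, weightField_apply]
  simp

theorem vectorFieldLieBracket_weightField_raisingField {f : 𝕜 → 𝕜} {p : 𝕜 × 𝕜 × 𝕜}
    (hf : DifferentiableAt 𝕜 f p.2.2) (euler : p.2.2 * deriv f p.2.2 = -4 * f p.2.2) :
    VectorField.lieBracket 𝕜 (weightField 𝕜) (raisingField f) p =
      (2 : 𝕜) • raisingField f p := by
  rw [vectorFieldLieBracket_clm_left, fderiv_raisingField_apply hf]
  simp only [weightField_apply, raisingField, Prod.mk_sub_mk, Prod.smul_mk, smul_eq_mul,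
    Prod.mk.injEq]
  refine ⟨by ring, ?_, by ring⟩
  linear_combination euler

theorem mul_deriv_zpow {u : 𝕜} (hu : u ≠ 0) (n : ℤ) :
    u * deriv (fun v ↦ v ^ n) u = n * u ^ n := by
  rw [deriv_zpow, mul_left_comm, ← zpow_one_add₀ hu, add_sub_cancel]

theorem sl2_commutation_relations_realization_n24_general {f : 𝕜 → 𝕜}
    {Q₁ Q₂ Q₃ : 𝕜 × 𝕜 × 𝕜 → 𝕜 × 𝕜 × 𝕜}
    (hQ₁ : ∀ p, Q₁ p = (0, 2 * p.2.1, -p.2.2))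
    (hQ₂ : ∀ p, Q₂ p = (0, -(f p.2.2 + p.2.1 ^ 2), p.2.1 * p.2.2))
    (hQ₃ : ∀ p, Q₃ p = (0, 1, 0))
    {p : 𝕜 × 𝕜 × 𝕜} (hf : DifferentiableAt 𝕜 f p.2.2)
    (euler : p.2.2 * deriv f p.2.2 = -4 * f p.2.2) :
    VectorField.lieBracket 𝕜 Q₁ Q₂ p = (2 : 𝕜) • Q₂ p ∧
      VectorField.lieBracket 𝕜 Q₁ Q₃ p = (-2 : 𝕜) • Q₃ p ∧
      VectorField.lieBracket 𝕜 Q₂ Q₃ p = Q₁ p := by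
  obtain rfl : Q₁ = weightField 𝕜 := funext hQ₁
  obtain rfl : Q₂ = raisingField f := funext hQ₂
  obtain rfl : Q₃ = loweringField 𝕜 := funext hQ₃
  exact ⟨vectorFieldLieBracket_weightField_raisingField hf euler,
    vectorFieldLieBracket_weightField_loweringField p,
    vectorFieldLieBracket_raisingField_loweringField hf⟩

end SL2

/-- The realization of sl(2,ℝ):
`Q₁ = 2x∂x − u∂u`, `Q₂ = −(u⁻⁴ + x²)∂x + xu∂u`, `Q₃ = ∂x`
(coordinates `(t,x,u)`), valid where `u ≠ 0`. -/
theorem sl2_commutation_relations_realization_n24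
    (Q₁ Q₂ Q₃ : ℝ × ℝ × ℝ → ℝ × ℝ × ℝ)
    (hQ₁ : ∀ p : ℝ × ℝ × ℝ, Q₁ p = (0, 2 * p.2.1, -p.2.2))
    (hQ₂ : ∀ p : ℝ × ℝ × ℝ,
      Q₂ p = (0, -(p.2.2 ^ (-4 : ℤ) + p.2.1 ^ 2), p.2.1 * p.2.2))
    (hQ₃ : ∀ p : ℝ × ℝ × ℝ, Q₃ p = (0, 1, 0)) :
    ∀ p : ℝ × ℝ × ℝ, p.2.2 ≠ 0 →
      lieBracket Q₁ Q₂ p = (2 : ℝ) • Q₂ p ∧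
      lieBracket Q₁ Q₃ p = (-2 : ℝ) • Q₃ p ∧
      lieBracket Q₂ Q₃ p = Q₁ p := by
  intro p hu
  simp only [lieBracket_eq_vectorFieldLieBracket]
  exact sl2_commutation_relations_realization_n24_general hQ₁ hQ₂ hQ₃
    (differentiableAt_zpow.2 (.inl hu)) (mod_cast mul_deriv_zpow hu (-4))
end

section
/- Let a : ℝ → ℝ and b, c : ℝ³ → ℝ be C^∞ functions, let p₀ = (t₀,x₀,u₀) ∈ ℝ³, and suppose a(t₀) ≠ 0. Consider the vector field Q(t,x,u) = (a(t), b(t,x,u), c(t,x,u)). Then there exist an open neighborhood Ω of p₀ and C^∞ real-valued functions T (depending on t only), X, U defined on Ω such that on Ω one has T'(t) ≠ 0 and ∂X/∂x · ∂U/∂u − ∂X/∂u · ∂U/∂x ≠ 0, and the map Φ(t,x,u) = (T(t), X(t,x,u), U(t,x,u)) straightens Q: at every point p ∈ Ω, DΦ(p)(Q(p)) = (1,0,0); equivalently, a(t)·T'(t) = 1, a·∂X/∂t + b·∂X/∂x + c·∂X/∂u = 0, and a·∂U/∂t + b·∂U/∂x + c·∂U/∂u = 0 hold on Ω. -/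
/-!
Call `γ : [0, 1] → E` a curve of time `τ` from `q` if `γ 0 = q` and `γ' = τ V(γ)`; these curves are
the solutions of the integral equation `γ = q + τ ∫ V(γ)`. Since composition with a `C^n` map is a
`C^n` operation on `C([0, 1], E)`, the inverse function theorem in this Banach space produces all
curves near a constant one, together with their smooth dependence on `(τ, q)` and on the endpoint.
Fix a linear splitting `z = τ(z) V(p₀) + q(z)` of `E`. The coordinate `Φ(p) = z` for which the curve
of time `τ(z)` from `p₀ + q(z)` ends at `p` has derivative `id` at `p₀`. Lengthening a curve by
running along `V` changes only its time, and differentiating this gives `DΦ(V) = V(p₀)` near `p₀`.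

For `Q = (a, v)` on `ℝ × W`, following `Φ` by the projection onto `W` along `Q(p₀)` gives a first
integral `Y` with `∂Y/∂w = id` at `p₀`, and `T = ∫ dt / a` is the missing time coordinate.
-/

open Set
open scoped ContDiff unitInterval

section Superposition

universe u

variable {𝕜 K : Type*} [TopologicalSpace K] [CompactSpace K]

/-- Pointwise evaluation `(A, h) ↦ (k ↦ A k (h k))` of a continuous family of operators on a
continuous family of vectors; the derivative of a superposition operator has this form. -/
noncomputable def pointwiseApply [NontriviallyNormedField 𝕜] {E F : Type*}
    [NormedAddCommGroup E] [NormedSpace 𝕜 E] [NormedAddCommGroup F] [NormedSpace 𝕜 F] :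
    C(K, E →L[𝕜] F) →L[𝕜] C(K, E) →L[𝕜] C(K, F) :=
  LinearMap.mkContinuous₂
    (LinearMap.mk₂ 𝕜 (fun (A : C(K, E →L[𝕜] F)) (h : C(K, E)) =>
      (⟨fun k => A k (h k), by fun_prop⟩ : C(K, F)))
      (fun _ _ _ => by ext; simp) (fun _ _ _ => by ext; simp)
      (fun _ _ _ => by ext; simp) (fun _ _ _ => by ext; simp)) 1
    (fun A h => by
      rw [one_mul]
      refine (ContinuousMap.norm_le _ (by positivity)).2 fun k => ?_
      exact (A k).le_of_opNorm_le_of_le (A.norm_coe_le_norm k) (h.norm_coe_le_norm k))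

variable [RCLike 𝕜] {E F : Type u} [NormedAddCommGroup E] [NormedSpace 𝕜 E]
  [NormedAddCommGroup F] [NormedSpace 𝕜 F]

theorem hasFDerivAt_continuousMap_comp {V : C(E, F)} {V' : C(E, E →L[𝕜] F)}
    (hV : ∀ x, HasFDerivAt V (V' x) x) (γ : C(K, E)) :
    HasFDerivAt (fun g : C(K, E) => V.comp g) (pointwiseApply (V'.comp γ)) γ := by
  let : NormedSpace ℝ E := .restrictScalars ℝ 𝕜 E
  rw [hasFDerivAt_iff_isLittleO, Asymptotics.isLittleO_iff]
  intro ε hε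
  obtain ⟨δ, hδ, hball⟩ : ∃ δ > 0, ∀ g : C(K, E), dist g γ < δ →
      dist (V'.comp g) (V'.comp γ) < ε :=
    Metric.continuous_iff.1 (ContinuousMap.continuous_postcomp V') γ ε hε
  filter_upwards [Metric.ball_mem_nhds γ hδ] with g hg
  refine (ContinuousMap.norm_le _ (by positivity)).2 fun k => ?_
  -- A point of a segment `[γ k, g k]` lies on a curve interpolating `γ` and `g`.
  have hbound : ∀ z ∈ segment ℝ (γ k) (g k), ‖V' z - V' (γ k)‖ ≤ ε := by
    rw [segment_eq_image_lineMap]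
    rintro _ ⟨θ, hθ, rfl⟩
    have hmem : AffineMap.lineMap γ g θ ∈ Metric.ball γ δ :=
      (convex_ball γ δ).lineMap_mem (Metric.mem_ball_self hδ) hg hθ
    have h := (ContinuousMap.dist_apply_le_dist k).trans (hball _ hmem).le
    simpa [dist_eq_norm, AffineMap.lineMap_apply] using h
  calc ‖V (g k) - V (γ k) - V' (γ k) (g k - γ k)‖
      ≤ ε * ‖g k - γ k‖ :=
        (convex_segment _ _).norm_image_sub_le_of_norm_hasFDerivWithin_le'
          (fun z _ => (hV z).hasFDerivWithinAt) hbound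
          (left_mem_segment ℝ _ _) (right_mem_segment ℝ _ _)
    _ ≤ ε * ‖g - γ‖ := by gcongr; exact (g - γ).norm_coe_le_norm k

theorem contDiff_continuousMap_comp {n : ℕ∞} {V : C(E, F)} (hV : ContDiff 𝕜 n V) :
    ContDiff 𝕜 n (fun g : C(K, E) => V.comp g) := by
  refine contDiff_iff_forall_nat_le.2 fun m hm => ?_
  replace hV : ContDiff 𝕜 m V := hV.of_le (mod_cast hm)
  clear hm
  induction m generalizing F with
  | zero => exact contDiff_zero.2 (ContinuousMap.continuous_postcomp V)
  | succ m ih =>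
    obtain ⟨V', hV', hderiv⟩ := contDiff_succ_iff_hasFDerivAt.1 hV
    exact contDiff_succ_iff_hasFDerivAt.2
      ⟨_, pointwiseApply.contDiff.comp (ih (V := ⟨V', hV'.continuous⟩) hV'),
        hasFDerivAt_continuousMap_comp hderiv⟩

end Superposition

section InverseFunction

variable {𝕜 E F : Type*} [RCLike 𝕜] [NormedAddCommGroup E] [NormedSpace 𝕜 E] [CompleteSpace E]
  [NormedAddCommGroup F] [NormedSpace 𝕜 F]

/- Smoothness of the inverse at the single point `f x₀` would not suffice: `ContDiffAt` with `n = ∞`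
gives no neighborhood on which the inverse is `C^∞`. -/
theorem exists_openPartialHomeomorph_contDiffOn_symm {n : WithTop ℕ∞} (hn : n ≠ 0) {f : E → F}
    (hf : ContDiff 𝕜 n f) {x₀ : E} (hx₀ : (fderiv 𝕜 f x₀).IsInvertible) :
    ∃ e : OpenPartialHomeomorph E F, ⇑e = f ∧ x₀ ∈ e.source ∧ ContDiffOn 𝕜 n e.symm e.target ∧
      ∀ y ∈ e.target, ∃ A : E ≃L[𝕜] F,
        fderiv 𝕜 f (e.symm y) = A ∧ HasFDerivAt e.symm (A.symm : F →L[𝕜] E) y := by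
  have hderiv : ∀ x, HasFDerivAt f (fderiv 𝕜 f x) x := fun x =>
    (hf.differentiable hn x).hasFDerivAt
  have hopen : IsOpen {x | (fderiv 𝕜 f x).IsInvertible} :=
    ContinuousLinearEquiv.isOpen.preimage (hf.continuous_fderiv hn)
  obtain ⟨A₀, hA₀⟩ := hx₀
  have hA₀' : HasFDerivAt f (A₀ : E →L[𝕜] F) x₀ := hA₀ ▸ hderiv x₀
  let e := (hf.contDiffAt.toOpenPartialHomeomorph f hA₀' hn).restrOpen _ hopen
  have hinv : ∀ y ∈ e.target, ∃ A : E ≃L[𝕜] F, (A : E →L[𝕜] F) = fderiv 𝕜 f (e.symm y) :=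
    fun y hy => (e.map_target hy).2
  refine ⟨e, rfl, ⟨hf.contDiffAt.mem_toOpenPartialHomeomorph_source hA₀' hn, A₀, hA₀⟩,
    fun y hy => ?_, fun y hy => ?_⟩
  · obtain ⟨A, hA⟩ := hinv y hy
    exact (e.contDiffAt_symm hy (hA ▸ hderiv _) hf.contDiffAt).contDiffWithinAt
  · obtain ⟨A, hA⟩ := hinv y hy
    exact ⟨A, hA.symm, e.hasFDerivAt_symm hy (hA ▸ hderiv _)⟩

end InverseFunction

section Primitive

variable {E : Type*} [NormedAddCommGroup E] [NormedSpace ℝ E]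

/-- The primitive vanishing at `0` of a continuous curve on the unit interval, as a continuous
linear operator. The curve is extended by constants so that it can be integrated over `ℝ`. -/
noncomputable def unitIntervalPrimitive : C(I, E) →L[ℝ] C(I, E) :=
  LinearMap.mkContinuous
    { toFun := fun γ => ⟨fun s => ∫ r in (0 : ℝ)..s, γ.IccExtend zero_le_one r,
        (intervalIntegral.continuous_primitive
          (fun _ _ => (map_continuous _).intervalIntegrable _ _) 0).comp continuous_subtype_val⟩
      map_add' := fun γ δ => by
        ext s
        exact intervalIntegral.integral_add
          ((γ.IccExtend zero_le_one).continuous.intervalIntegrable _ _)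
          ((δ.IccExtend zero_le_one).continuous.intervalIntegrable _ _)
      map_smul' := fun c γ => by
        ext s
        exact intervalIntegral.integral_smul _ _ } 1
    (fun γ => by
      refine (ContinuousMap.norm_le _ (by positivity)).2 fun s => ?_
      rw [one_mul]
      refine (intervalIntegral.norm_integral_le_of_norm_le_const
        (fun r _ => γ.norm_coe_le_norm (projIcc 0 1 zero_le_one r))).trans ?_
      rw [sub_zero, abs_of_nonneg s.2.1]
      exact mul_le_of_le_one_right (norm_nonneg _) s.2.2)

variable [CompleteSpace E]

theorem hasDerivAt_integral_IccExtend (γ : C(I, E)) (s : I) :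
    HasDerivAt (fun t => ∫ r in (0 : ℝ)..t, γ.IccExtend zero_le_one r) (γ s) s := by
  simpa using (γ.IccExtend zero_le_one).continuous.integral_hasStrictDerivAt 0 (s : ℝ)
    |>.hasDerivAt

theorem unitIntervalPrimitive_eq_sub {γ : C(I, E)} {G : ℝ → E}
    (hG : ∀ s : I, HasDerivAt G (γ s) s) (s : I) :
    unitIntervalPrimitive γ s = G s - G 0 := by
  refine intervalIntegral.integral_eq_sub_of_hasDerivAt (fun r hr => ?_)
    ((map_continuous _).intervalIntegrable _ _)
  rw [uIcc_of_le s.2.1] at hr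
  have hrI : r ∈ I := ⟨hr.1, hr.2.trans s.2.2⟩
  simpa [IccExtend_of_mem _ _ hrI] using hG ⟨r, hrI⟩

theorem unitIntervalPrimitive_const (v : E) (s : I) :
    unitIntervalPrimitive (.const I v) s = (s : ℝ) • v := by
  simpa using unitIntervalPrimitive_eq_sub (γ := .const I v)
    (fun s => (hasDerivAt_id (s : ℝ)).smul_const v |>.congr_deriv (one_smul ℝ v)) s

theorem hasDerivAt_primitive_of_continuousOn {f : ℝ → E} {s : Set ℝ} (hs : IsOpen s)
    (hs' : s.OrdConnected) (hf : ContinuousOn f s) {t₀ t : ℝ} (ht₀ : t₀ ∈ s) (ht : t ∈ s) :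
    HasDerivAt (fun t => ∫ x in t₀..t, f x) (f t) t :=
  intervalIntegral.integral_hasDerivAt_right
    (hf.mono (hs'.uIcc_subset ht₀ ht)).intervalIntegrable
    (hf.stronglyMeasurableAtFilter hs t ht) (hf.continuousAt (hs.mem_nhds ht))

theorem contDiffOn_primitive {n : ℕ∞} {f : ℝ → E} {s : Set ℝ} (hs : IsOpen s)
    (hs' : s.OrdConnected) (hf : ContDiffOn ℝ n f s) {t₀ : ℝ} (ht₀ : t₀ ∈ s) :
    ContDiffOn ℝ (n + 1) (fun t => ∫ x in t₀..t, f x) s := by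
  have hderiv := fun t => hasDerivAt_primitive_of_continuousOn (t := t) hs hs' hf.continuousOn ht₀
  exact (contDiffOn_succ_iff_deriv_of_isOpen hs).2
    ⟨fun t ht => (hderiv t ht).differentiableAt.differentiableWithinAt, by simp,
      hf.congr fun t ht => (hderiv t ht).deriv⟩

end Primitive

section EvalSub

variable {R E H : Type*} [Ring R] [AddCommGroup E] [Module R E] [TopologicalSpace E]
  [IsTopologicalAddGroup E] [AddCommGroup H] [Module R H] [TopologicalSpace H]
  [IsTopologicalAddGroup H]

/-- The linear automorphism `(v, h) ↦ (ev h, h - ρ v)` attached to a section `ρ` of `ev`. It is the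
linearization of the shooting map, with `ev` the endpoint evaluation. -/
def evalSubEquiv (ev : H →L[R] E) (ρ : E →L[R] H) (hρ : Function.LeftInverse ev ρ) :
    (E × H) ≃L[R] E × H :=
  .equivOfInverse
    ((ev.comp (.snd R E H)).prod (.snd R E H - ρ.comp (.fst R E H)))
    ((ContinuousLinearMap.fst R E H - ev.comp (.snd R E H)).prod
      (.snd R E H + ρ.comp (.fst R E H - ev.comp (.snd R E H))))
    (fun x => by simp [hρ x.1])
    (fun y => by simp [hρ _])

@[simp]
theorem evalSubEquiv_apply (ev : H →L[R] E) (ρ : E →L[R] H) (hρ : Function.LeftInverse ev ρ)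
    (x : E × H) : evalSubEquiv ev ρ hρ x = (ev x.2, x.2 - ρ x.1) := rfl

end EvalSub

section PicardMap

variable {E : Type*} [NormedAddCommGroup E] [NormedSpace ℝ E]

/-- The Picard operator `((τ, q), γ) ↦ q + τ ∫ V(γ)` of the vector field `V`. The curves `γ` that it
fixes are the solutions of `γ' = τ V(γ)`, `γ 0 = q`. -/
noncomputable def picardMap (V : C(E, E)) (x : (ℝ × E) × C(I, E)) : C(I, E) :=
  .const I x.1.2 + x.1.1 • unitIntervalPrimitive (V.comp x.2)

theorem contDiff_picardMap {n : ℕ∞} {V : C(E, E)} (hV : ContDiff ℝ n V) :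
    ContDiff ℝ n (picardMap V) := by
  have hconst : ContDiff ℝ n (ContinuousMap.const I : E → C(I, E)) :=
    (ContinuousLinearMap.const ℝ I : E →L[ℝ] C(I, E)).contDiff
  have hcomp : ContDiff ℝ n fun γ : C(I, E) => V.comp γ := contDiff_continuousMap_comp hV
  unfold picardMap
  fun_prop

theorem fderiv_picardMap {V : C(E, E)} {V' : C(E, E →L[ℝ] E)}
    (hV : ∀ x, HasFDerivAt V (V' x) x) (τ : ℝ) (q : E) (γ : C(I, E)) (r : ℝ) (w : E)
    (h : C(I, E)) :
    fderiv ℝ (picardMap V) ((τ, q), γ) ((r, w), h) = .const I w +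
      (τ • unitIntervalPrimitive (pointwiseApply (V'.comp γ) h) +
        r • unitIntervalPrimitive (V.comp γ)) := by
  have hparam : HasFDerivAt (fun x : (ℝ × E) × C(I, E) => x.1) _ ((τ, q), γ) :=
    hasFDerivAt_fst (𝕜 := ℝ)
  have hcurve : HasFDerivAt (fun x : (ℝ × E) × C(I, E) => x.2) _ ((τ, q), γ) :=
    hasFDerivAt_snd (𝕜 := ℝ)
  have hconst : HasFDerivAt (fun x : (ℝ × E) × C(I, E) => ContinuousMap.const I x.1.2) _
      ((τ, q), γ) :=
    (ContinuousLinearMap.const ℝ I : E →L[ℝ] C(I, E)).hasFDerivAt.comp _ hparam.snd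
  have hcomp : HasFDerivAt (fun x : (ℝ × E) × C(I, E) => V.comp x.2) _ ((τ, q), γ) :=
    HasFDerivAt.comp ((τ, q), γ) (g := V.comp) (hasFDerivAt_continuousMap_comp hV γ) hcurve
  have hprim : HasFDerivAt
      (fun x : (ℝ × E) × C(I, E) => unitIntervalPrimitive (V.comp x.2)) _ ((τ, q), γ) :=
    (unitIntervalPrimitive : C(I, E) →L[ℝ] C(I, E)).hasFDerivAt.comp _ hcomp
  have hpicard : HasFDerivAt (picardMap V) _ ((τ, q), γ) := hconst.add (hparam.fst.smul hprim)
  rw [hpicard.fderiv]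
  rfl

/- Reparametrizing a solution `γ' = τ V(γ)` to time `τ + r` is the family `s ↦ γ (s (1 + r / τ))`,
whose derivative in `r` at `0` is `s ↦ s V(γ s)`. -/
theorem exists_fderiv_picardMap_eq_self [CompleteSpace E] {V : C(E, E)} {V' : C(E, E →L[ℝ] E)}
    (hV : ∀ x, HasFDerivAt V (V' x) x) {x : ℝ × E} {γ : C(I, E)}
    (hγ : picardMap V (x, γ) = γ) :
    ∃ δ : C(I, E), δ 1 = V (γ 1) ∧ fderiv ℝ (picardMap V) (x, γ) ((1, 0), δ) = δ := by
  obtain ⟨τ, q⟩ := x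
  let δ : C(I, E) := ⟨fun s => (s : ℝ) • V (γ s), by fun_prop⟩
  let G : ℝ → E := fun t => q + τ • ∫ r in (0 : ℝ)..t, (V.comp γ).IccExtend zero_le_one r
  have hG : ∀ s : I, G s = γ s := fun s => DFunLike.congr_fun hγ s
  have hG' : ∀ s : I, HasDerivAt G (τ • V (γ s)) s := fun s =>
    ((hasDerivAt_integral_IccExtend (V.comp γ) s).const_smul τ).const_add q
  have hderiv : ∀ s : I, HasDerivAt (fun t : ℝ => t • V (G t))
      ((τ • pointwiseApply (V'.comp γ) δ + V.comp γ) s) s := fun s => by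
    have h : HasDerivAt (fun t : ℝ => t • V (G t)) _ (s : ℝ) :=
      (hasDerivAt_id (s : ℝ)).smul ((hV (G s)).comp_hasDerivAt _ (hG' s))
    refine h.congr_deriv ?_
    have hpt : pointwiseApply (V'.comp γ) δ s = V' (γ s) ((s : ℝ) • V (γ s)) := rfl
    simp [hG, hpt, smul_comm τ]
  refine ⟨δ, one_smul ℝ _, ?_⟩
  rw [fderiv_picardMap hV, one_smul, ← map_smul, ← map_add]
  ext s
  have hprim := unitIntervalPrimitive_eq_sub hderiv s
  rw [zero_smul, sub_zero, hG] at hprim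
  simpa [δ] using hprim

end PicardMap

section Rectification

variable {E : Type*} [NormedAddCommGroup E] [NormedSpace ℝ E]

/-- The shooting map of `V` at `p₀`. Its argument is a curve `γ` together with a parameter `z`,
which stands for the time and the displacement `J z = (τ, q)` of the initial point from `p₀`. Its
value is the endpoint of `γ` and the defect of the equation `γ = p₀ + q + τ ∫ V(γ)`. -/
noncomputable def shootingMap (V : C(E, E)) (p₀ : E) (J : E →L[ℝ] ℝ × E) (x : E × C(I, E)) :
    E × C(I, E) :=
  (x.2 1, x.2 - picardMap V ((0, p₀) + J x.1, x.2))

theorem contDiff_shootingMap {n : ℕ∞} {V : C(E, E)} (hV : ContDiff ℝ n V) (p₀ : E)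
    (J : E →L[ℝ] ℝ × E) : ContDiff ℝ n (shootingMap V p₀ J) := by
  have heval : ContDiff ℝ n fun γ : C(I, E) => γ 1 :=
    (ContinuousMap.evalCLM ℝ (1 : I) : C(I, E) →L[ℝ] E).contDiff
  have hpicard : ContDiff ℝ n (picardMap V) := contDiff_picardMap hV
  exact (heval.comp contDiff_snd).prodMk (contDiff_snd.sub
    (hpicard.comp ((contDiff_const.add (J.contDiff.comp contDiff_fst)).prodMk contDiff_snd)))

theorem fderiv_shootingMap {V : C(E, E)} (hV : ContDiff ℝ 1 V) (p₀ : E) (J : E →L[ℝ] ℝ × E)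
    (z : E) (γ : C(I, E)) (v : E) (h : C(I, E)) :
    fderiv ℝ (shootingMap V p₀ J) (z, γ) (v, h) =
      (h 1, h - fderiv ℝ (picardMap V) ((0, p₀) + J z, γ) (J v, h)) := by
  have hcurve : HasFDerivAt (fun x : E × C(I, E) => x.2) _ (z, γ) :=
    hasFDerivAt_snd (𝕜 := ℝ)
  have heval : HasFDerivAt (fun x : E × C(I, E) => x.2 1) _ (z, γ) :=
    (ContinuousMap.evalCLM ℝ (1 : I) : C(I, E) →L[ℝ] E).hasFDerivAt.comp _ hcurve
  have hparam : HasFDerivAt (fun x : E × C(I, E) => (0, p₀) + J x.1) _ (z, γ) :=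
    (J.hasFDerivAt.comp _ hasFDerivAt_fst).const_add (0, p₀)
  have hpicard := ((contDiff_picardMap (n := 1) hV).differentiable one_ne_zero
    ((0, p₀) + J z, γ)).hasFDerivAt
  have hdefect : HasFDerivAt (fun x : E × C(I, E) => picardMap V ((0, p₀) + J x.1, x.2)) _ (z, γ) :=
    HasFDerivAt.comp (z, γ) (g := picardMap V) hpicard (hparam.prodMk hcurve)
  have hshoot : HasFDerivAt (shootingMap V p₀ J) _ (z, γ) :=
    heval.prodMk (hcurve.sub hdefect)
  rw [hshoot.fderiv]
  rfl

theorem shootingMap_zero_const (V : C(E, E)) (p₀ : E) (J : E →L[ℝ] ℝ × E) :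
    shootingMap V p₀ J (0, .const I p₀) = (p₀, 0) := by
  simp [shootingMap, picardMap]

variable [CompleteSpace E]

theorem exists_fderiv_shootingMap_eq_evalSubEquiv {V : C(E, E)} (hV : ContDiff ℝ 1 V) {p₀ : E}
    {J : E →L[ℝ] ℝ × E} (hJ : ∀ v, (J v).2 + (J v).1 • V p₀ = v) :
    ∃ (ρ : E →L[ℝ] C(I, E)) (hρ : Function.LeftInverse (ContinuousMap.evalCLM ℝ (1 : I)) ρ),
      fderiv ℝ (shootingMap V p₀ J) (0, .const I p₀) = evalSubEquiv _ ρ hρ := by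
  let V' : C(E, E →L[ℝ] E) := ⟨fderiv ℝ V, hV.continuous_fderiv one_ne_zero⟩
  have hV' : ∀ x, HasFDerivAt V (V' x) x := fun x =>
    (hV.differentiable one_ne_zero x).hasFDerivAt
  let ρ : E →L[ℝ] C(I, E) := (ContinuousLinearMap.const ℝ I).comp ((.snd ℝ ℝ E ∘L J)) +
    (.fst ℝ ℝ E ∘L J).smulRight (unitIntervalPrimitive (.const I (V p₀)))
  have hρ : ∀ v, ρ v = .const I (J v).2 + (J v).1 • unitIntervalPrimitive (.const I (V p₀)) :=
    fun _ => rfl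
  refine ⟨ρ, fun v => ?_, ?_⟩
  · simp [hρ, unitIntervalPrimitive_const, hJ]
  · refine ContinuousLinearMap.ext fun ⟨v, h⟩ => ?_
    have hconst : V.comp (.const I p₀) = .const I (V p₀) := rfl
    rw [fderiv_shootingMap hV, map_zero, add_zero, fderiv_picardMap hV']
    simp [hρ, hconst]

theorem exists_fderiv_shootingMap_eq {V : C(E, E)} (hV : ContDiff ℝ 1 V) {p₀ e : E}
    {J : E →L[ℝ] ℝ × E} (hJ : J e = (1, 0)) {x : E × C(I, E)} {p : E}
    (hx : shootingMap V p₀ J x = (p, 0)) :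
    ∃ δ : C(I, E), fderiv ℝ (shootingMap V p₀ J) x (e, δ) = (V p, 0) := by
  let V' : C(E, E →L[ℝ] E) := ⟨fderiv ℝ V, hV.continuous_fderiv one_ne_zero⟩
  have hV' : ∀ x, HasFDerivAt V (V' x) x := fun x =>
    (hV.differentiable one_ne_zero x).hasFDerivAt
  obtain ⟨z, γ⟩ := x
  obtain ⟨rfl, hdefect⟩ : γ 1 = p ∧ γ - picardMap V ((0, p₀) + J z, γ) = 0 := Prod.ext_iff.1 hx
  obtain ⟨δ, hδ₁, hδ⟩ := exists_fderiv_picardMap_eq_self hV' (sub_eq_zero.1 hdefect).symm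
  exact ⟨δ, by rw [fderiv_shootingMap hV, hJ, hδ, hδ₁, sub_self]⟩

theorem exists_contDiffOn_fderiv_apply_eq {n : ℕ∞} (hn : n ≠ 0) {V : E → E} (hV : ContDiff ℝ n V)
    {p₀ : E} (hp₀ : V p₀ ≠ 0) :
    ∃ (Ω : Set E) (Φ : E → E), IsOpen Ω ∧ p₀ ∈ Ω ∧ ContDiffOn ℝ n Φ Ω ∧
      fderiv ℝ Φ p₀ = .id ℝ E ∧ ∀ p ∈ Ω, fderiv ℝ Φ p (V p) = V p₀ := by
  have hn' : (n : WithTop ℕ∞) ≠ 0 := mod_cast hn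
  have hV₁ : ContDiff ℝ 1 V := hV.of_le (ENat.one_le_iff_ne_zero_withTop.2 hn')
  lift V to C(E, E) using hV.continuous
  obtain ⟨φ, hφ⟩ := SeparatingDual.exists_eq_one (R := ℝ) hp₀
  let J : E →L[ℝ] ℝ × E := φ.prod (.id ℝ E - φ.smulRight (V p₀))
  obtain ⟨ρ, hρ, hF₀⟩ := exists_fderiv_shootingMap_eq_evalSubEquiv hV₁ (p₀ := p₀) (J := J)
    fun v => by simp [J]
  obtain ⟨e, he, hsource, hsymm, hinv⟩ := exists_openPartialHomeomorph_contDiffOn_symm hn'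
    (contDiff_shootingMap hV p₀ J) ⟨_, hF₀.symm⟩
  have he_zero : e (0, .const I p₀) = (p₀, 0) := he ▸ shootingMap_zero_const V p₀ J
  have hp₀_mem : (p₀, 0) ∈ e.target := he_zero ▸ e.map_source hsource
  have hfderiv : ∀ p, (p, 0) ∈ e.target → ∀ {v w h},
      fderiv ℝ (shootingMap V p₀ J) (e.symm (p, 0)) (v, h) = (w, 0) →
        fderiv ℝ (fun p => (e.symm (p, 0)).1) p w = v := fun p hp v w h hvw => by
    obtain ⟨A, hA, hA'⟩ := hinv _ hp
    have hsection : HasFDerivAt (fun p : E => e.symm (p, 0)) _ p :=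
      HasFDerivAt.comp p (g := e.symm) hA' (hasFDerivAt_prodMk_left p 0)
    rw [hA, ContinuousLinearEquiv.coe_coe, ← A.eq_symm_apply] at hvw
    rw [hsection.fst.fderiv]
    exact (congrArg Prod.fst hvw).symm
  refine ⟨{p | (p, 0) ∈ e.target}, fun p => (e.symm (p, 0)).1,
    e.open_target.preimage (.prodMk_left 0), hp₀_mem,
    contDiff_fst.comp_contDiffOn
      (hsymm.comp (contDiff_prodMk_left 0).contDiffOn fun _ hp => hp), ?_, fun p hp => ?_⟩
  · ext v
    refine hfderiv p₀ hp₀_mem (h := ρ v) ?_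
    rw [← he_zero, e.left_inv hsource, hF₀]
    simp [hρ v]
  · have hshoot : shootingMap V p₀ J (e.symm (p, 0)) = (p, 0) := he ▸ e.right_inv hp
    obtain ⟨δ, hδ⟩ := exists_fderiv_shootingMap_eq hV₁ (e := V p₀) (by simp [J, hφ]) hshoot
    exact hfderiv p hp hδ

end Rectification

theorem exists_contDiffOn_mul_deriv_eq_one {n : ℕ∞} {a : ℝ → ℝ} (ha : ContDiff ℝ n a) {t₀ : ℝ}
    (ha₀ : a t₀ ≠ 0) :
    ∃ (s : Set ℝ) (T : ℝ → ℝ), IsOpen s ∧ t₀ ∈ s ∧ ContDiffOn ℝ (n + 1) T s ∧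
      ∀ t ∈ s, a t * deriv T t = 1 := by
  obtain ⟨ε, hε, hne⟩ :=
    Metric.eventually_nhds_iff_ball.1 (ha.continuous.continuousAt.eventually_ne ha₀)
  have hball : (Metric.ball t₀ ε).OrdConnected := (convex_ball t₀ ε).ordConnected
  have ht₀ : t₀ ∈ Metric.ball t₀ ε := Metric.mem_ball_self hε
  have hinv : ContDiffOn ℝ n a⁻¹ (Metric.ball t₀ ε) := ha.contDiffOn.inv hne
  refine ⟨_, fun t => ∫ x in t₀..t, a⁻¹ x, Metric.isOpen_ball, ht₀,
    contDiffOn_primitive Metric.isOpen_ball hball hinv ht₀, fun t ht => ?_⟩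
  have hderiv : HasDerivAt (fun t => ∫ x in t₀..t, a⁻¹ x) (a⁻¹ t) t :=
    hasDerivAt_primitive_of_continuousOn Metric.isOpen_ball hball hinv.continuousOn ht₀ ht
  rw [hderiv.deriv, Pi.inv_apply, mul_inv_cancel₀ (hne t ht)]

theorem exists_contDiffOn_fderiv_apply_eq_zero {W : Type*} [NormedAddCommGroup W] [NormedSpace ℝ W]
    [CompleteSpace W] {n : ℕ∞} (hn : n ≠ 0) {V : ℝ × W → ℝ × W} (hV : ContDiff ℝ n V)
    {p₀ : ℝ × W} (hp₀ : (V p₀).1 ≠ 0) :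
    ∃ (Ω : Set (ℝ × W)) (Y : ℝ × W → W), IsOpen Ω ∧ p₀ ∈ Ω ∧ ContDiffOn ℝ n Y Ω ∧
      ∀ p ∈ Ω, fderiv ℝ Y p (V p) = 0 ∧ (fderiv ℝ Y p ∘L .inr ℝ ℝ W).IsInvertible := by
  have hn' : (n : WithTop ℕ∞) ≠ 0 := mod_cast hn
  obtain ⟨Ω, Φ, hΩ, hp₀_mem, hΦ, hΦ₀, hΦV⟩ :=
    exists_contDiffOn_fderiv_apply_eq hn hV fun h => hp₀ (congrArg Prod.fst h)
  let L : ℝ × W →L[ℝ] W :=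
    .snd ℝ ℝ W - (ContinuousLinearMap.fst ℝ ℝ W).smulRight ((V p₀).1⁻¹ • (V p₀).2)
  have hfderiv : ∀ p ∈ Ω, fderiv ℝ (L ∘ Φ) p = L ∘L fderiv ℝ Φ p := fun p hp =>
    (L.hasFDerivAt.comp p
      ((hΦ.differentiableOn hn').differentiableAt (hΩ.mem_nhds hp)).hasFDerivAt).fderiv
  have hY : ContDiffOn ℝ n (L ∘ Φ) Ω := L.contDiff.comp_contDiffOn hΦ
  have hcont : ContinuousOn (fun p => fderiv ℝ (L ∘ Φ) p ∘L .inr ℝ ℝ W) Ω :=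
    (hY.continuousOn_fderiv_of_isOpen hΩ (ENat.one_le_iff_ne_zero_withTop.2 hn')).clm_comp
      continuousOn_const
  refine ⟨_, L ∘ Φ, hcont.isOpen_inter_preimage hΩ ContinuousLinearEquiv.isOpen,
    ⟨hp₀_mem, .refl ℝ W, ?_⟩, hY.mono inter_subset_left, fun p hp => ⟨?_, hp.2⟩⟩
  · ext w
    beta_reduce
    rw [hfderiv p₀ hp₀_mem, hΦ₀]
    simp [L]
  · rw [hfderiv p hp.1, ContinuousLinearMap.comp_apply, hΦV p hp.1]
    simp [L, hp₀]

theorem linearMap_det_prod {R : Type*} [CommRing R] (f : R × R →ₗ[R] R × R) :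
    f.det = (f (1, 0)).1 * (f (0, 1)).2 - (f (0, 1)).1 * (f (1, 0)).2 := by
  rw [← LinearMap.det_toMatrix (Module.Basis.finTwoProd R), Matrix.det_fin_two]
  simp [LinearMap.toMatrix_apply]

theorem linearMap_prod_prod_apply {R M : Type*} [Semiring R] [AddCommMonoid M] [Module R M]
    (f : R × R × R →ₗ[R] M) (x y z : R) :
    f (x, y, z) = x • f (1, 0, 0) + y • f (0, 1, 0) + z • f (0, 0, 1) := by
  simp [← map_smul, ← map_add]

theorem straightening_lemma_time_case_general {n : ℕ∞} (hn : n ≠ 0)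
    (a : ℝ → ℝ) (b c : ℝ × ℝ × ℝ → ℝ)
    (ha : ContDiff ℝ n a) (hb : ContDiff ℝ n b) (hc : ContDiff ℝ n c)
    (p₀ : ℝ × ℝ × ℝ) (ha₀ : a p₀.1 ≠ 0) :
    ∃ (Ω : Set (ℝ × ℝ × ℝ)) (T : ℝ → ℝ) (X U : ℝ × ℝ × ℝ → ℝ),
      IsOpen Ω ∧ p₀ ∈ Ω ∧
      ContDiffOn ℝ n (fun p : ℝ × ℝ × ℝ => T p.1) Ω ∧
      ContDiffOn ℝ n X Ω ∧ ContDiffOn ℝ n U Ω ∧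
      ∀ p ∈ Ω,
        deriv T p.1 ≠ 0 ∧
        fderiv ℝ X p (0, 1, 0) * fderiv ℝ U p (0, 0, 1) -
          fderiv ℝ X p (0, 0, 1) * fderiv ℝ U p (0, 1, 0) ≠ 0 ∧
        a p.1 * deriv T p.1 = 1 ∧
        a p.1 * fderiv ℝ X p (1, 0, 0) + b p * fderiv ℝ X p (0, 1, 0) +
          c p * fderiv ℝ X p (0, 0, 1) = 0 ∧
        a p.1 * fderiv ℝ U p (1, 0, 0) + b p * fderiv ℝ U p (0, 1, 0) +
          c p * fderiv ℝ U p (0, 0, 1) = 0 := by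
  have hn' : (n : WithTop ℕ∞) ≠ 0 := mod_cast hn
  obtain ⟨s, T, hs, hp₀s, hT, hderiv⟩ := exists_contDiffOn_mul_deriv_eq_one ha ha₀
  obtain ⟨Ω, Y, hΩ, hp₀Ω, hY, hderivY⟩ := exists_contDiffOn_fderiv_apply_eq_zero hn
    (V := fun p => (a p.1, b p, c p)) ((ha.comp contDiff_fst).prodMk (hb.prodMk hc)) ha₀
  refine ⟨Prod.fst ⁻¹' s ∩ Ω, T, fun p => (Y p).1, fun p => (Y p).2,
    (hs.preimage continuous_fst).inter hΩ, ⟨hp₀s, hp₀Ω⟩,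
    (hT.of_le le_self_add).comp contDiff_fst.contDiffOn fun _ hp => hp.1,
    hY.fst.mono inter_subset_right, hY.snd.mono inter_subset_right, fun p hp => ?_⟩
  have hYp : HasFDerivAt Y (fderiv ℝ Y p) p :=
    ((hY.differentiableOn hn').differentiableAt (hΩ.mem_nhds hp.2)).hasFDerivAt
  obtain ⟨hfirst, A, hA⟩ := hderivY p hp.2
  have hdet := A.toLinearEquiv.isUnit_det'.ne_zero
  have hA_apply : ∀ v, A v = fderiv ℝ Y p (0, v) := fun v => DFunLike.congr_fun hA v
  rw [linearMap_det_prod] at hdet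
  have hlin := linearMap_prod_prod_apply (fderiv ℝ Y p).toLinearMap (a p.1) (b p) (c p)
  have haT := hderiv p.1 hp.1
  simp only [hYp.fst.fderiv, hYp.snd.fderiv]
  refine ⟨right_ne_zero_of_mul_eq_one haT, ?_, haT, ?_, ?_⟩
  · simpa [hA_apply] using hdet
  · simpa [hfirst, eq_comm] using congrArg Prod.fst hlin
  · simpa [hfirst, eq_comm] using congrArg Prod.snd hlin

/-- Straightening lemma, case `a(t₀) ≠ 0`: the vector field
`Q = a(t)∂t + b(t,x,u)∂x + c(t,x,u)∂u` can be locally reduced to `∂t` by a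
change of variables `(t,x,u) ↦ (T(t), X(t,x,u), U(t,x,u))`. Partial derivatives
are expressed through the Fréchet derivative applied to the coordinate
directions `(1,0,0)`, `(0,1,0)`, `(0,0,1)`. -/
theorem straightening_lemma_time_case
    (a : ℝ → ℝ) (b c : ℝ × ℝ × ℝ → ℝ)
    (ha : ContDiff ℝ (⊤ : ℕ∞) a) (hb : ContDiff ℝ (⊤ : ℕ∞) b) (hc : ContDiff ℝ (⊤ : ℕ∞) c)
    (p₀ : ℝ × ℝ × ℝ) (ha₀ : a p₀.1 ≠ 0) :
    ∃ (Ω : Set (ℝ × ℝ × ℝ)) (T : ℝ → ℝ) (X U : ℝ × ℝ × ℝ → ℝ),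
      IsOpen Ω ∧ p₀ ∈ Ω ∧
      ContDiffOn ℝ (⊤ : ℕ∞) (fun p : ℝ × ℝ × ℝ => T p.1) Ω ∧
      ContDiffOn ℝ (⊤ : ℕ∞) X Ω ∧ ContDiffOn ℝ (⊤ : ℕ∞) U Ω ∧
      ∀ p ∈ Ω,
        deriv T p.1 ≠ 0 ∧
        fderiv ℝ X p (0, 1, 0) * fderiv ℝ U p (0, 0, 1) -
          fderiv ℝ X p (0, 0, 1) * fderiv ℝ U p (0, 1, 0) ≠ 0 ∧
        a p.1 * deriv T p.1 = 1 ∧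
        a p.1 * fderiv ℝ X p (1, 0, 0) + b p * fderiv ℝ X p (0, 1, 0) +
          c p * fderiv ℝ X p (0, 0, 1) = 0 ∧
        a p.1 * fderiv ℝ U p (1, 0, 0) + b p * fderiv ℝ U p (0, 1, 0) +
          c p * fderiv ℝ U p (0, 0, 1) = 0 := by
  exact straightening_lemma_time_case_general (by simp) a b c ha hb hc p₀ ha₀
end

section
/- Let u : ℝ² → ℝ be twice continuously differentiable and satisfy u_t(t,x) = exp(u_x(t,x)) · u_xx(t,x) at every (t,x) ∈ ℝ². Then for every ε ∈ ℝ, the function v(t,x) = u(e^{−ε}·t, x) − ε·x satisfies v_t(t,x) = exp(v_x(t,x)) · v_xx(t,x) at every (t,x) ∈ ℝ². (This realizes the additional symmetry e₅ = t∂t − x∂u admitted by u_t = F(u_x)u_xx in the case F = exp u_x.) -/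
/-- `u_t = ∂u/∂t`. -/
noncomputable def pd_t (u : ℝ × ℝ → ℝ) (p : ℝ × ℝ) : ℝ :=
  deriv (fun s => u (s, p.2)) p.1

/-- `u_x = ∂u/∂x`. -/
noncomputable def pd_x (u : ℝ × ℝ → ℝ) (p : ℝ × ℝ) : ℝ :=
  deriv (fun y => u (p.1, y)) p.2

/-- `u_xx = ∂²u/∂x²`. -/
noncomputable def pd_xx (u : ℝ × ℝ → ℝ) (p : ℝ × ℝ) : ℝ :=
  deriv (deriv (fun y => u (p.1, y))) p.2

open Filter Topology

/-! The dilation of time multiplies `u_t` by `c`, while subtracting `a x` shifts `u_x` by `-a` and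
leaves `u_xx` alone. So the equation `u_t = F(u_x) u_xx` survives as soon as `F (r - a) = c F r`,
which `F = exp` satisfies with `c = exp (-a)`. -/

/-- `u` is a classical solution at `p` of the nonlinear heat equation `u_t = F(u_x) u_xx`. The
derivatives entering the equation are required to exist, since `deriv` is `0` where they do not;
`u_xx` presupposes `u_x` on a whole neighbourhood along the line `t = p.1`. -/
structure IsSolutionAt (F : ℝ → ℝ) (u : ℝ × ℝ → ℝ) (p : ℝ × ℝ) : Prop where
  differentiableAt_time : DifferentiableAt ℝ (fun s => u (s, p.2)) p.1
  eventually_differentiableAt_space :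
    ∀ᶠ y in 𝓝 p.2, DifferentiableAt ℝ (fun z => u (p.1, z)) y
  differentiableAt_deriv_space : DifferentiableAt ℝ (deriv fun y => u (p.1, y)) p.2
  pd_t_eq : pd_t u p = F (pd_x u p) * pd_xx u p

/-- The function `(t, x) ↦ u(c t, x) - a x`. For `c = exp (-ε)` and `a = ε` these are the
transformations generated by `t∂t - x∂u`. -/
def dilateTilt (c a : ℝ) (u : ℝ × ℝ → ℝ) (q : ℝ × ℝ) : ℝ :=
  u (c * q.1, q.2) - a * q.2

theorem IsSolutionAt.of_contDiff {F : ℝ → ℝ} {u : ℝ × ℝ → ℝ} {p : ℝ × ℝ} (hu : ContDiff ℝ 2 u)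
    (heq : pd_t u p = F (pd_x u p) * pd_xx u p) : IsSolutionAt F u p := by
  have hdiff : Differentiable ℝ u := hu.differentiable two_ne_zero
  have hslice : ContDiff ℝ 2 fun y => u (p.1, y) := by fun_prop
  exact ⟨by fun_prop, .of_forall (hslice.differentiable two_ne_zero),
    hslice.differentiable_deriv_two p.2, heq⟩

section Tilt

variable {𝕜 : Type*} [NontriviallyNormedField 𝕜] {f : 𝕜 → 𝕜} {x : 𝕜}

theorem deriv_sub_const_mul_id (a : 𝕜) (hf : DifferentiableAt 𝕜 f x) :
    deriv (fun y => f y - a * y) x = deriv f x - a := by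
  rw [deriv_fun_sub hf (by fun_prop), deriv_const_mul_id']

theorem deriv_sub_const_mul_id_eventuallyEq (a : 𝕜)
    (hf : ∀ᶠ y in 𝓝 x, DifferentiableAt 𝕜 f y) :
    deriv (fun y => f y - a * y) =ᶠ[𝓝 x] fun y => deriv f y - a :=
  hf.mono fun _ hy => deriv_sub_const_mul_id a hy

end Tilt

section DilateTilt

variable {u : ℝ × ℝ → ℝ} {p : ℝ × ℝ} (c a : ℝ)

theorem pd_t_dilateTilt : pd_t (dilateTilt c a u) p = c * pd_t u (c * p.1, p.2) :=
  (deriv_sub_const (a * p.2)).trans (deriv_comp_mul_left c (fun s => u (s, p.2)) p.1)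

theorem pd_x_dilateTilt (hu : DifferentiableAt ℝ (fun y => u (c * p.1, y)) p.2) :
    pd_x (dilateTilt c a u) p = pd_x u (c * p.1, p.2) - a :=
  deriv_sub_const_mul_id a hu

theorem pd_xx_dilateTilt
    (hu : ∀ᶠ y in 𝓝 p.2, DifferentiableAt ℝ (fun z => u (c * p.1, z)) y) :
    pd_xx (dilateTilt c a u) p = pd_xx u (c * p.1, p.2) :=
  (deriv_sub_const_mul_id_eventuallyEq a hu).deriv_eq.trans (deriv_sub_const a)

end DilateTilt

theorem symmetry_of_ut_eq_exp_ux_uxx_general {F : ℝ → ℝ} {c a : ℝ}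
    (hF : ∀ r, F (r - a) = c * F r) {u : ℝ × ℝ → ℝ} {p : ℝ × ℝ}
    (hu : IsSolutionAt F u (c * p.1, p.2)) : IsSolutionAt F (dilateTilt c a u) p where
  differentiableAt_time :=
    (hu.differentiableAt_time.comp p.1 (differentiableAt_id.const_mul c)).sub_const (a * p.2)
  eventually_differentiableAt_space :=
    hu.eventually_differentiableAt_space.mono fun y hy => hy.sub (differentiableAt_id.const_mul a)
  differentiableAt_deriv_space :=
    (deriv_sub_const_mul_id_eventuallyEq a
      hu.eventually_differentiableAt_space).differentiableAt_iff.mpr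
        (hu.differentiableAt_deriv_space.sub_const a)
  pd_t_eq := by
    rw [pd_t_dilateTilt, pd_x_dilateTilt c a hu.eventually_differentiableAt_space.self_of_nhds,
      pd_xx_dilateTilt c a hu.eventually_differentiableAt_space, hF, hu.pd_t_eq, mul_assoc]

/-- The symmetry `e₅ = t∂t − x∂u` of `u_t = exp(u_x)·u_xx`:
if `u` solves the equation then so does `v(t,x) = u(e^{−ε}t, x) − εx`. -/
theorem symmetry_of_ut_eq_exp_ux_uxx
    (u : ℝ × ℝ → ℝ) (hu : ContDiff ℝ 2 u)
    (heq : ∀ p : ℝ × ℝ, pd_t u p = Real.exp (pd_x u p) * pd_xx u p)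
    (ε : ℝ) :
    ∀ p : ℝ × ℝ,
      pd_t (fun q : ℝ × ℝ => u (Real.exp (-ε) * q.1, q.2) - ε * q.2) p =
        Real.exp (pd_x (fun q : ℝ × ℝ =>
            u (Real.exp (-ε) * q.1, q.2) - ε * q.2) p) *
          pd_xx (fun q : ℝ × ℝ => u (Real.exp (-ε) * q.1, q.2) - ε * q.2) p := by
  exact fun p => (symmetry_of_ut_eq_exp_ux_uxx_general
    (fun r => by rw [← Real.exp_add, neg_add_eq_sub])
    (.of_contDiff hu (heq (Real.exp (-ε) * p.1, p.2)))).pd_t_eq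
end

section
/- Let Ω ⊆ ℝ² be open, let u : Ω → ℝ be twice continuously differentiable with u(t,x) ≠ 0 on Ω, and suppose u_t = u⁻⁴·u_xx − 2·u⁻⁵·(u_x)² at every point of Ω. Fix ε ∈ ℝ and let Ω' = {(t,x) : 1 − εx ≠ 0 and (t, x/(1−εx)) ∈ Ω}. Then the function v(t,x) = (1 − εx)⁻¹ · u(t, x/(1−εx)) is nonvanishing on Ω' and satisfies v_t = v⁻⁴·v_xx − 2·v⁻⁵·(v_x)² at every point of Ω'. (This realizes the projective symmetry −x²∂x + xu∂u from the sl(2,ℝ) invariance algebra of this equation.) -/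
/-!
In terms of `w = 1/u` the equation `u_t = u⁻⁴u_xx − 2u⁻⁵u_x²` reads `u_t = −u⁻²w_xx`. Under a Möbius
change of variable `x ↦ (ax + b)/(cx + d)`, the function `w` is multiplied by `cx + d`, and Bol's
lemma says that its second derivative is then just multiplied by `(ad − bc)²(cx + d)⁻³`. The factor
`(cx + d)²` contributed by `u⁻²` turns this into `(ad − bc)²(cx + d)⁻¹`, which is how `u_t` scales
once time is rescaled by `(ad − bc)²`. The theorem is the case of the matrix `(1, 0; −ε, 1)`.
-/

open Topology

section Calculus

variable {𝕜 : Type*} [NontriviallyNormedField 𝕜]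
  {E : Type*} [NormedAddCommGroup E] [NormedSpace 𝕜 E] {a b c d x : 𝕜}

theorem contDiffAt_prodMk_left {F G : Type*} [NormedAddCommGroup F] [NormedSpace 𝕜 F]
    [NormedAddCommGroup G] [NormedSpace 𝕜 G] {n : WithTop ℕ∞} {u : F × G → E} {p : F × G}
    (hu : ContDiffAt 𝕜 n u p) : ContDiffAt 𝕜 n (fun y => u (p.1, y)) p.2 :=
  hu.comp p.2 (contDiffAt_const.prodMk contDiffAt_id)

theorem differentiableAt_deriv_of_contDiffAt {f : 𝕜 → E} (hf : ContDiffAt 𝕜 2 f x) :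
    DifferentiableAt 𝕜 (deriv f) x :=
  (hf.derivWithin one_add_one_eq_two.le).differentiableAt one_ne_zero

theorem hasDerivAt_affine (c d x : 𝕜) : HasDerivAt (fun y => c * y + d) c x := by
  simpa using ((hasDerivAt_id x).const_mul c).add_const d

theorem hasDerivAt_affine_div_affine (hx : c * x + d ≠ 0) :
    HasDerivAt (fun y => (a * y + b) / (c * y + d)) ((a * d - b * c) / (c * x + d) ^ 2) x :=
  ((hasDerivAt_affine a b x).div (hasDerivAt_affine c d x) hx).congr_deriv (by ring)

theorem hasDerivAt_affine_smul_comp {f : 𝕜 → E} (hx : c * x + d ≠ 0)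
    (hf : DifferentiableAt 𝕜 f ((a * x + b) / (c * x + d))) :
    HasDerivAt (fun y => (c * y + d) • f ((a * y + b) / (c * y + d)))
      (c • f ((a * x + b) / (c * x + d)) +
        ((a * d - b * c) / (c * x + d)) • deriv f ((a * x + b) / (c * x + d))) x := by
  refine ((hasDerivAt_affine c d x).smul
    (hf.hasDerivAt.scomp x (hasDerivAt_affine_div_affine hx))).congr_deriv ?_
  simp only [Function.comp_apply]
  match_scalars <;> field_simp

/-- Bol's lemma in order two: the weight `c * y + d` is what makes the terms in `deriv f` cancel. -/
theorem deriv_deriv_affine_smul_comp {f : 𝕜 → E} (hx : c * x + d ≠ 0)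
    (hf : ContDiffAt 𝕜 2 f ((a * x + b) / (c * x + d))) :
    deriv (deriv fun y => (c * y + d) • f ((a * y + b) / (c * y + d))) x =
      ((a * d - b * c) ^ 2 / (c * x + d) ^ 3) •
        deriv (deriv f) ((a * x + b) / (c * x + d)) := by
  have hmoebius := hasDerivAt_affine_div_affine (a := a) (b := b) hx
  have haffine := hasDerivAt_affine c d x
  have hderiv : deriv (fun y => (c * y + d) • f ((a * y + b) / (c * y + d))) =ᶠ[𝓝 x]
      fun y => c • f ((a * y + b) / (c * y + d)) +
        ((a * d - b * c) / (c * y + d)) • deriv f ((a * y + b) / (c * y + d)) := by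
    filter_upwards [haffine.continuousAt.eventually_ne hx,
      hmoebius.continuousAt.eventually (hf.eventually (by simp))] with y hy hfy
    exact (hasDerivAt_affine_smul_comp hy (hfy.differentiableAt two_ne_zero)).deriv
  have hf₁ := (hf.differentiableAt two_ne_zero).hasDerivAt.scomp x hmoebius
  have hf₂ := (differentiableAt_deriv_of_contDiffAt hf).hasDerivAt.scomp x hmoebius
  have hweight : HasDerivAt (fun y => (a * d - b * c) / (c * y + d))
      (-((a * d - b * c) * c) / (c * x + d) ^ 2) x := by
    simpa using (hasDerivAt_const x (a * d - b * c)).fun_div haffine hx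
  rw [hderiv.deriv_eq]
  refine ((hf₁.const_smul c).add (hweight.smul hf₂)).deriv.trans ?_
  simp only [Function.comp_apply]
  match_scalars <;> field_simp
  ring

theorem deriv_deriv_inv_of_contDiffAt {f : 𝕜 → 𝕜} (hf : ContDiffAt 𝕜 2 f x) (hx : f x ≠ 0) :
    deriv (deriv fun y => (f y)⁻¹) x =
      2 * deriv f x ^ 2 / f x ^ 3 - deriv (deriv f) x / f x ^ 2 := by
  have hderiv : deriv (fun y => (f y)⁻¹) =ᶠ[𝓝 x] fun y => -deriv f y / f y ^ 2 := by
    filter_upwards [hf.continuousAt.eventually_ne hx, hf.eventually (by simp)] with y hy hfy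
    exact deriv_fun_inv'' (hfy.differentiableAt two_ne_zero) hy
  have hf₁ := (hf.differentiableAt two_ne_zero).hasDerivAt
  have hf₂ := (differentiableAt_deriv_of_contDiffAt hf).hasDerivAt
  rw [hderiv.deriv_eq]
  refine (hf₂.fun_neg.fun_div (hf₁.fun_pow 2) (pow_ne_zero 2 hx)).deriv.trans ?_
  field_simp
  ring

end Calculus

/-- `u` is nonzero at `p` and satisfies `u_t = u⁻⁴u_xx − 2u⁻⁵u_x²` there. Nonvanishing is
part of the notion because `0⁻¹ = 0` would otherwise give the equation a meaning at zeros of `u`. -/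
def SolvesFastDiffusionAt (u : ℝ × ℝ → ℝ) (p : ℝ × ℝ) : Prop :=
  u p ≠ 0 ∧ pd_t u p = u p ^ (-4 : ℤ) * pd_xx u p - 2 * u p ^ (-5 : ℤ) * pd_x u p ^ 2

theorem solvesFastDiffusionAt_iff_pd_xx_inv {u : ℝ × ℝ → ℝ} {p : ℝ × ℝ}
    (hu : ContDiffAt ℝ 2 (fun y => u (p.1, y)) p.2) :
    SolvesFastDiffusionAt u p ↔
      u p ≠ 0 ∧ pd_t u p = -(pd_xx (fun q => (u q)⁻¹) p / u p ^ 2) := by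
  refine and_congr_right fun hne => ?_
  have hinv : pd_xx (fun q => (u q)⁻¹) p = 2 * pd_x u p ^ 2 / u p ^ 3 - pd_xx u p / u p ^ 2 :=
    deriv_deriv_inv_of_contDiffAt hu hne
  have hrhs : u p ^ (-4 : ℤ) * pd_xx u p - 2 * u p ^ (-5 : ℤ) * pd_x u p ^ 2 =
      -(pd_xx (fun q => (u q)⁻¹) p / u p ^ 2) := by
    rw [hinv, zpow_neg, zpow_neg, zpow_ofNat, zpow_ofNat]
    field_simp
    ring
  rw [hrhs]

/-- The map of the `(t, x)`-plane given by the Möbius map `x ↦ (ax + b) / (cx + d)`, with time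
rescaled by `(ad − bc)²` so that the fast diffusion equation is preserved for every determinant. -/
noncomputable def projectiveMap (a b c d : ℝ) (p : ℝ × ℝ) : ℝ × ℝ :=
  ((a * d - b * c) ^ 2 * p.1, (a * p.2 + b) / (c * p.2 + d))

/-- The action of the matrix `(a, b; c, d)` on functions of `(t, x)`. The one-parameter group of
matrices `(1, 0; −ε, 1)` acts with infinitesimal generator `−x²∂x + xu∂u`. -/
noncomputable def projectiveTransform (a b c d : ℝ) (u : ℝ × ℝ → ℝ) (p : ℝ × ℝ) : ℝ :=
  (c * p.2 + d)⁻¹ * u (projectiveMap a b c d p)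

section Projective

variable {a b c d : ℝ} {u : ℝ × ℝ → ℝ} {p : ℝ × ℝ}

theorem projectiveMap_unipotent (ε : ℝ) (p : ℝ × ℝ) :
    projectiveMap 1 0 (-ε) 1 p = (p.1, p.2 / (1 - ε * p.2)) := by
  simp [projectiveMap, neg_add_eq_sub]

theorem projectiveTransform_unipotent (ε : ℝ) (u : ℝ × ℝ → ℝ) :
    projectiveTransform 1 0 (-ε) 1 u =
      fun q => (1 - ε * q.2)⁻¹ * u (q.1, q.2 / (1 - ε * q.2)) := by
  simp [funext_iff, projectiveTransform, projectiveMap_unipotent, neg_add_eq_sub]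

theorem contDiffAt_projectiveTransform {n : WithTop ℕ∞} (hp : c * p.2 + d ≠ 0)
    (hu : ContDiffAt ℝ n u (projectiveMap a b c d p)) :
    ContDiffAt ℝ n (projectiveTransform a b c d u) p := by
  have hmap : ContDiffAt ℝ n (projectiveMap a b c d) p := by
    unfold projectiveMap
    fun_prop (disch := assumption)
  have hweight : ContDiffAt ℝ n (fun q : ℝ × ℝ => (c * q.2 + d)⁻¹) p := by
    fun_prop (disch := assumption)
  exact hweight.mul (hu.comp p hmap)

theorem pd_t_projectiveTransform (a b c d : ℝ) (u : ℝ × ℝ → ℝ) (p : ℝ × ℝ) :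
    pd_t (projectiveTransform a b c d u) p =
      (a * d - b * c) ^ 2 / (c * p.2 + d) * pd_t u (projectiveMap a b c d p) := by
  simp only [pd_t, projectiveTransform, projectiveMap, deriv_const_mul_field]
  rw [deriv_comp_mul_left ((a * d - b * c) ^ 2)
    (fun s => u (s, (a * p.2 + b) / (c * p.2 + d))), smul_eq_mul]
  ring

theorem pd_xx_inv_projectiveTransform (hp : c * p.2 + d ≠ 0)
    (hu : ContDiffAt ℝ 2 u (projectiveMap a b c d p)) (hne : u (projectiveMap a b c d p) ≠ 0) :
    pd_xx (fun q => (projectiveTransform a b c d u q)⁻¹) p =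
      (a * d - b * c) ^ 2 / (c * p.2 + d) ^ 3 *
        pd_xx (fun q => (u q)⁻¹) (projectiveMap a b c d p) := by
  simp only [projectiveTransform, mul_inv, inv_inv]
  exact deriv_deriv_affine_smul_comp hp ((contDiffAt_prodMk_left hu).inv hne)

theorem projective_symmetry_of_fast_diffusion_general (hp : c * p.2 + d ≠ 0)
    (hu : ContDiffAt ℝ 2 u (projectiveMap a b c d p))
    (hsol : SolvesFastDiffusionAt u (projectiveMap a b c d p)) :
    SolvesFastDiffusionAt (projectiveTransform a b c d u) p := by
  rw [solvesFastDiffusionAt_iff_pd_xx_inv (contDiffAt_prodMk_left hu)] at hsol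
  obtain ⟨hne, heq⟩ := hsol
  have hTu := contDiffAt_projectiveTransform hp hu
  rw [solvesFastDiffusionAt_iff_pd_xx_inv (contDiffAt_prodMk_left hTu)]
  refine ⟨mul_ne_zero (inv_ne_zero hp) hne, ?_⟩
  rw [pd_t_projectiveTransform, pd_xx_inv_projectiveTransform hp hu hne, heq, projectiveTransform]
  field_simp

end Projective

/-- The projective symmetry `−x²∂x + xu∂u` of `u_t = u⁻⁴u_xx − 2u⁻⁵u_x²`:
if `u` is a nonvanishing solution on `Ω` then
`v(t,x) = (1−εx)⁻¹·u(t, x/(1−εx))` is a nonvanishing solution on `Ω'`. -/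
theorem projective_symmetry_of_fast_diffusion
    (Ω : Set (ℝ × ℝ)) (hΩ : IsOpen Ω)
    (u : ℝ × ℝ → ℝ) (hu : ContDiffOn ℝ 2 u Ω)
    (hne : ∀ p ∈ Ω, u p ≠ 0)
    (heq : ∀ p ∈ Ω,
      pd_t u p = (u p) ^ (-4 : ℤ) * pd_xx u p -
        2 * (u p) ^ (-5 : ℤ) * (pd_x u p) ^ 2)
    (ε : ℝ) :
    ∀ p : ℝ × ℝ, 1 - ε * p.2 ≠ 0 → (p.1, p.2 / (1 - ε * p.2)) ∈ Ω →
      (fun q : ℝ × ℝ => (1 - ε * q.2)⁻¹ * u (q.1, q.2 / (1 - ε * q.2))) p ≠ 0 ∧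
      pd_t (fun q : ℝ × ℝ =>
          (1 - ε * q.2)⁻¹ * u (q.1, q.2 / (1 - ε * q.2))) p =
        ((fun q : ℝ × ℝ =>
            (1 - ε * q.2)⁻¹ * u (q.1, q.2 / (1 - ε * q.2))) p) ^ (-4 : ℤ) *
          pd_xx (fun q : ℝ × ℝ =>
            (1 - ε * q.2)⁻¹ * u (q.1, q.2 / (1 - ε * q.2))) p -
        2 * ((fun q : ℝ × ℝ =>
            (1 - ε * q.2)⁻¹ * u (q.1, q.2 / (1 - ε * q.2))) p) ^ (-5 : ℤ) *
          (pd_x (fun q : ℝ × ℝ =>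
            (1 - ε * q.2)⁻¹ * u (q.1, q.2 / (1 - ε * q.2))) p) ^ 2 := by
  intro p hx hp
  rw [← projectiveMap_unipotent] at hp
  exact projectiveTransform_unipotent ε u ▸ projective_symmetry_of_fast_diffusion_general
    (by simpa [neg_add_eq_sub] using hx) (hu.contDiffAt (hΩ.mem_nhds hp)) ⟨hne _ hp, heq _ hp⟩
end

section
/- Let k ∈ ℝ, k ≠ 0, σ ∈ {1, −1}, and let u : ℝ² → ℝ be twice continuously differentiable satisfying u_t(t,x) = σ·exp(2k·u_x(t,x))·u_xx(t,x) + x at every (t,x) ∈ ℝ². Define, for all (s,y) with 2ks > 0, v(s,y) = −2k·u( ln(2ks)/(2k), −y ) − y·ln(2ks). Then v satisfies v_s(s,y) = σ·exp(v_y(s,y))·v_yy(s,y) at every (s,y) with 2ks > 0. (Thus the change of variables t̄ = (1/(2k))e^{2kt}, x̄ = −x, v = −2ku + 2ktx reduces u_t = σe^{2ku_x}u_xx + x to the equation v_t = σe^{v_x}v_xx.) -/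
/-!
Write `v = -2k (u - t x)` in the variables `s = e^{2kt} / (2k)`, `y = -x`. Since `∂ₜ(t x) = x`,
subtracting `t x` cancels the forcing term. It also shifts the slope: `v_y = 2k u_x - 2kt`, so
`e^{v_y} = e^{2k u_x} / e^{2kt}`, and the spurious factor `e^{2kt} = ds/dt` is exactly what the
change of time absorbs.
-/

open scoped Topology

/-- The time `t = ln(2ks) / (2k)` of the forced equation corresponding to the time
`s = e^{2kt} / (2k)` of the unforced one; it is meaningful only for `2ks > 0`. -/
noncomputable def forcedTime (k s : ℝ) : ℝ :=
  Real.log (2 * k * s) / (2 * k)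

/-- The function `v = -2ku + 2ktx` of the paper in the new variables `(s, y)`, where
`t = forcedTime k s` and `x = -y`, so that `2ktx = -y ln(2ks)`. -/
noncomputable def removeForcing (k : ℝ) (u : ℝ × ℝ → ℝ) (q : ℝ × ℝ) : ℝ :=
  -2 * k * u (forcedTime k q.1, -q.2) - q.2 * Real.log (2 * k * q.1)

lemma hasDerivAt_log_const_mul {c s : ℝ} (h : c * s ≠ 0) :
    HasDerivAt (fun r => Real.log (c * r)) s⁻¹ s := by
  have hc : c ≠ 0 := left_ne_zero_of_mul h
  have hlog := ((hasDerivAt_id' s).const_mul c).log h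
  exact hlog.congr_deriv (by field_simp)

section removeForcing

variable {k s y u' : ℝ} {u : ℝ × ℝ → ℝ}

lemma hasDerivAt_removeForcing_fst (hs : 2 * k * s ≠ 0)
    (hu : HasDerivAt (fun t => u (t, -y)) u' (forcedTime k s)) :
    HasDerivAt (fun r => removeForcing k u (r, y)) (-(u' + y) / s) s := by
  have hk : k ≠ 0 := right_ne_zero_of_mul (left_ne_zero_of_mul hs)
  have hlog := hasDerivAt_log_const_mul hs
  have hcomp : HasDerivAt (fun r => u (forcedTime k r, -y)) (u' * (s⁻¹ / (2 * k))) s :=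
    hu.comp s (hlog.div_const (2 * k))
  refine ((hcomp.const_mul (-2 * k)).sub (hlog.const_mul y)).congr_deriv ?_
  field_simp
  ring

lemma hasDerivAt_removeForcing_snd
    (hu : HasDerivAt (fun x => u (forcedTime k s, x)) u' (-y)) :
    HasDerivAt (fun z => removeForcing k u (s, z)) (2 * k * u' - Real.log (2 * k * s)) y := by
  have hcomp : HasDerivAt (fun z => u (forcedTime k s, -z)) (u' * -1) y :=
    hu.comp y (hasDerivAt_neg y)
  exact ((hcomp.const_mul (-2 * k)).sub
    ((hasDerivAt_id' y).mul_const (Real.log (2 * k * s)))).congr_deriv (by ring)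

lemma hasDerivAt_deriv_removeForcing_snd
    (hu : ∀ᶠ x in 𝓝 (-y), DifferentiableAt ℝ (fun x => u (forcedTime k s, x)) x)
    (hu' : HasDerivAt (deriv fun x => u (forcedTime k s, x)) u' (-y)) :
    HasDerivAt (deriv fun z => removeForcing k u (s, z)) (-2 * k * u') y := by
  have hfirst : (deriv fun z => removeForcing k u (s, z)) =ᶠ[𝓝 y] fun z =>
      2 * k * deriv (fun x => u (forcedTime k s, x)) (-z) - Real.log (2 * k * s) := by
    filter_upwards [continuous_neg.continuousAt.eventually hu] with z hz
    exact (hasDerivAt_removeForcing_snd hz.hasDerivAt).deriv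
  have hcomp : HasDerivAt (fun z => deriv (fun x => u (forcedTime k s, x)) (-z)) (u' * -1) y :=
    hu'.comp y (hasDerivAt_neg y)
  have hsecond := (hcomp.const_mul (2 * k)).sub_const (Real.log (2 * k * s))
  exact (hsecond.congr_of_eventuallyEq hfirst).congr_deriv (by ring)

end removeForcing

theorem change_of_variables_exp_diffusion_forced_general
    {k σ : ℝ} {u : ℝ × ℝ → ℝ} {p : ℝ × ℝ} (hp : 0 < 2 * k * p.1)
    (hut : DifferentiableAt ℝ (fun t => u (t, -p.2)) (forcedTime k p.1))
    (hux : ∀ᶠ x in 𝓝 (-p.2), DifferentiableAt ℝ (fun x => u (forcedTime k p.1, x)) x)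
    (huxx : DifferentiableAt ℝ (deriv fun x => u (forcedTime k p.1, x)) (-p.2))
    (heq : pd_t u (forcedTime k p.1, -p.2) =
      σ * Real.exp (2 * k * pd_x u (forcedTime k p.1, -p.2)) *
        pd_xx u (forcedTime k p.1, -p.2) + -p.2) :
    pd_t (removeForcing k u) p =
      σ * Real.exp (pd_x (removeForcing k u) p) * pd_xx (removeForcing k u) p := by
  obtain ⟨s, y⟩ := p
  set q : ℝ × ℝ := (forcedTime k s, -y)
  have hvt : pd_t (removeForcing k u) (s, y) = -(pd_t u q + y) / s :=
    (hasDerivAt_removeForcing_fst hp.ne' hut.hasDerivAt).deriv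
  have hvx : pd_x (removeForcing k u) (s, y) = 2 * k * pd_x u q - Real.log (2 * k * s) :=
    (hasDerivAt_removeForcing_snd hux.self_of_nhds.hasDerivAt).deriv
  have hvxx : pd_xx (removeForcing k u) (s, y) = -2 * k * pd_xx u q :=
    (hasDerivAt_deriv_removeForcing_snd hux huxx.hasDerivAt).deriv
  have hexp : Real.exp (pd_x (removeForcing k u) (s, y)) =
      Real.exp (2 * k * pd_x u q) / (2 * k * s) := by
    rw [hvx, Real.exp_sub, Real.exp_log hp]
  have hks : 2 * k * s ≠ 0 := hp.ne'
  have hk : k ≠ 0 := right_ne_zero_of_mul (left_ne_zero_of_mul hks)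
  have hs : s ≠ 0 := right_ne_zero_of_mul hks
  rw [hvt, hexp, hvxx, heq]
  field_simp
  ring

/-- The change of variables `t̄ = (1/(2k))e^{2kt}`, `x̄ = −x`,
`v = −2ku + 2ktx` reduces `u_t = σe^{2ku_x}u_xx + x` to `v_t = σe^{v_x}v_xx`:
if `u` solves the former on ℝ², then
`v(s,y) = −2k·u(ln(2ks)/(2k), −y) − y·ln(2ks)` solves the latter for `2ks > 0`. -/
theorem change_of_variables_exp_diffusion_forced
    (k : ℝ) (hk : k ≠ 0) (σ : ℝ) (hσ : σ = 1 ∨ σ = -1)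
    (u : ℝ × ℝ → ℝ) (hu : ContDiff ℝ 2 u)
    (heq : ∀ p : ℝ × ℝ,
      pd_t u p = σ * Real.exp (2 * k * pd_x u p) * pd_xx u p + p.2) :
    ∀ p : ℝ × ℝ, 0 < 2 * k * p.1 →
      pd_t (fun q : ℝ × ℝ =>
          -2 * k * u (Real.log (2 * k * q.1) / (2 * k), -q.2) -
            q.2 * Real.log (2 * k * q.1)) p =
        σ * Real.exp (pd_x (fun q : ℝ × ℝ =>
            -2 * k * u (Real.log (2 * k * q.1) / (2 * k), -q.2) -
              q.2 * Real.log (2 * k * q.1)) p) *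
          pd_xx (fun q : ℝ × ℝ =>
            -2 * k * u (Real.log (2 * k * q.1) / (2 * k), -q.2) -
              q.2 * Real.log (2 * k * q.1)) p := by
  intro p hp
  have hud : Differentiable ℝ u := hu.differentiable two_ne_zero
  have hut : Differentiable ℝ fun t => u (t, -p.2) := by fun_prop
  have hux : ContDiff ℝ 2 fun x => u (forcedTime k p.1, x) := by fun_prop
  exact change_of_variables_exp_diffusion_forced_general hp (hut _)
    (.of_forall (hux.differentiable two_ne_zero)) (hux.differentiable_deriv_two _) (heq _)
end

section
/- Let Ω ⊆ ℝ × (0,∞) be open and let u : Ω → (0,∞) be twice continuously differentiable satisfying u_t = x²·u⁻¹·e^{ω}·u_xx + (−2 − ω²)·e^{ω}, where ω := x·u_x/u, at every point (t,x) ∈ Ω. Define, for all (t,y) with y < 0 and (t, −1/y) ∈ Ω, v(t,y) = −y·ln u(t, −1/y) − 2y·(1 + ln(−1/y)). Then v satisfies v_t(t,y) = exp(v_y(t,y))·v_yy(t,y) at every such (t,y). (Thus the change of variables t̄ = t, x̄ = −x⁻¹, v = x⁻¹ln u + 2x⁻¹(1 + ln x) reduces the equation u_t = x²u⁻¹e^{ω}u_xx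 + (−2 − ω²)e^{ω} to v_t = e^{v_x}v_xx.) -/
/-!
Write `x = -1 / y` and `g = log u + 2 * (1 + log x)`, so that `v = -y * g = g / x`. Inversion acts
simply on such products: `v_y = x * g_x - g` and `v_yy = x ^ 3 * g_xx`. Since `x * g_x = ω + 2` and
`x ^ 2 * g_xx = x ^ 2 * u_xx / u - ω ^ 2 - 2`, this gives `exp v_y = exp ω / (x ^ 2 * u)`, and
`exp v_y * v_yy` is `1 / (x * u)` times the right-hand side of the equation for `u`, just as `v_t`
is `1 / (x * u)` times `u_t`.
-/

open Filter Topology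

section Inversion

variable {𝕜 : Type*} [NontriviallyNormedField 𝕜]

/-- The transform `y ↦ -y * g (-1 / y)`, that is `g x / x` in the variable `x = -1 / y`. -/
noncomputable def negInvTransform (g : 𝕜 → 𝕜) (y : 𝕜) : 𝕜 :=
  -y * g (-1 / y)

variable {g : 𝕜 → 𝕜} {g' y : 𝕜}

theorem hasDerivAt_neg_one_div (hy : y ≠ 0) : HasDerivAt (fun z : 𝕜 => -1 / z) (1 / y ^ 2) y :=
  ((hasDerivAt_const y (-1 : 𝕜)).fun_div (hasDerivAt_id' y) hy).congr_deriv (by ring)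

theorem hasDerivAt_comp_neg_one_div (hy : y ≠ 0) (hg : HasDerivAt g g' (-1 / y)) :
    HasDerivAt (fun z => g (-1 / z)) (g' * (1 / y ^ 2)) y :=
  hg.comp y (hasDerivAt_neg_one_div hy)

theorem hasDerivAt_negInvTransform (hy : y ≠ 0) (hg : HasDerivAt g g' (-1 / y)) :
    HasDerivAt (negInvTransform g) (-1 / y * g' - g (-1 / y)) y := by
  refine ((hasDerivAt_id' y).fun_neg.fun_mul (hasDerivAt_comp_neg_one_div hy hg)).congr_deriv ?_
  field_simp
  ring

theorem hasDerivAt_deriv_negInvTransform {g'' : 𝕜} (hy : y ≠ 0)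
    (hg : ∀ᶠ x in 𝓝 (-1 / y), DifferentiableAt 𝕜 g x) (hg' : HasDerivAt (deriv g) g'' (-1 / y)) :
    HasDerivAt (deriv (negInvTransform g)) ((-1 / y) ^ 3 * g'') y := by
  have hderiv : deriv (negInvTransform g) =ᶠ[𝓝 y]
      fun z => -1 / z * deriv g (-1 / z) - g (-1 / z) := by
    filter_upwards [eventually_ne_nhds hy,
      (hasDerivAt_neg_one_div hy).continuousAt.eventually hg] with z hz hgz
    exact (hasDerivAt_negInvTransform hz hgz.hasDerivAt).deriv
  refine HasDerivAt.congr_of_eventuallyEq ?_ hderiv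
  refine (((hasDerivAt_neg_one_div hy).fun_mul (hasDerivAt_comp_neg_one_div hy hg')).fun_sub
    (hasDerivAt_comp_neg_one_div hy hg.self_of_nhds.hasDerivAt)).congr_deriv ?_
  field_simp
  ring

end Inversion

section LogProfile

/-- The function `log f + 2 * (1 + log x)`, whose quotient by `x` is the new unknown of the change
of variables. For `x < 0` the junk value `Real.log x = log |x|` is still an antiderivative of
`1 / x`, so only `x ≠ 0` matters for its derivatives. -/
noncomputable def logProfile (f : ℝ → ℝ) (x : ℝ) : ℝ :=
  Real.log (f x) + 2 * (1 + Real.log x)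

variable {f : ℝ → ℝ} {x : ℝ}

theorem hasDerivAt_logProfile {f' : ℝ} (hx : x ≠ 0) (hfx : f x ≠ 0) (hf : HasDerivAt f f' x) :
    HasDerivAt (logProfile f) (f' / f x + 2 / x) x :=
  ((hf.log hfx).fun_add (((Real.hasDerivAt_log hx).const_add 1).const_mul 2)).congr_deriv (by ring)

theorem eventually_hasDerivAt_logProfile (hx : x ≠ 0) (hfx : f x ≠ 0)
    (hf : ∀ᶠ z in 𝓝 x, DifferentiableAt ℝ f z) :
    ∀ᶠ z in 𝓝 x, HasDerivAt (logProfile f) (deriv f z / f z + 2 / z) z := by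
  filter_upwards [eventually_ne_nhds hx, hf.self_of_nhds.continuousAt.eventually_ne hfx, hf]
    with z hz hfz hdiff
  exact hasDerivAt_logProfile hz hfz hdiff.hasDerivAt

theorem hasDerivAt_deriv_logProfile {f'' : ℝ} (hx : x ≠ 0) (hfx : f x ≠ 0)
    (hf : ∀ᶠ z in 𝓝 x, DifferentiableAt ℝ f z) (hf' : HasDerivAt (deriv f) f'' x) :
    HasDerivAt (deriv (logProfile f)) (f'' / f x - (deriv f x / f x) ^ 2 - 2 / x ^ 2) x := by
  have hderiv : deriv (logProfile f) =ᶠ[𝓝 x] fun z => deriv f z / f z + 2 / z :=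
    (eventually_hasDerivAt_logProfile hx hfx hf).mono fun _ h => h.deriv
  refine HasDerivAt.congr_of_eventuallyEq ?_ hderiv
  refine ((hf'.fun_div hf.self_of_nhds.hasDerivAt hfx).fun_add
    ((hasDerivAt_const x (2 : ℝ)).fun_div (hasDerivAt_id' x) hx)).congr_deriv ?_
  field_simp
  ring

theorem exp_two_sub_logProfile (hx : x ≠ 0) (hfx : 0 < f x) :
    Real.exp (2 - logProfile f x) = 1 / (x ^ 2 * f x) := by
  have hlog : 2 - logProfile f x = -Real.log (x ^ 2 * f x) := by
    rw [logProfile, Real.log_mul (pow_ne_zero 2 hx) hfx.ne', Real.log_pow]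
    push_cast
    ring
  rw [hlog, Real.exp_neg, Real.exp_log (by positivity), one_div]

end LogProfile

section ChangeOfVariables

/-- The paper's `ω = x * u_x / u`. -/
noncomputable def elasticity (u : ℝ × ℝ → ℝ) (p : ℝ × ℝ) : ℝ :=
  p.2 * pd_x u p / u p

/-- The right-hand side `x² u⁻¹ e^ω u_xx + (-2 - ω²) e^ω` of the evolution equation for `u`. -/
noncomputable def elasticDiffusion (u : ℝ × ℝ → ℝ) (p : ℝ × ℝ) : ℝ :=
  p.2 ^ 2 * (u p)⁻¹ * Real.exp (elasticity u p) * pd_xx u p +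
    (-2 - elasticity u p ^ 2) * Real.exp (elasticity u p)

/-- The new unknown `v (t, y) = -y * log u - 2 * y * (1 + log x)`, with `u` taken at `(t, x)`,
`x = -1 / y`. -/
noncomputable def expDiffusionTransform (u : ℝ × ℝ → ℝ) (q : ℝ × ℝ) : ℝ :=
  -q.2 * Real.log (u (q.1, -1 / q.2)) - 2 * q.2 * (1 + Real.log (-1 / q.2))

theorem expDiffusionTransform_slice (u : ℝ × ℝ → ℝ) (t : ℝ) :
    (fun y => expDiffusionTransform u (t, y)) =
      negInvTransform (logProfile fun x => u (t, x)) := by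
  funext y
  simp only [expDiffusionTransform, negInvTransform, logProfile]
  ring

variable {u : ℝ × ℝ → ℝ} {t y : ℝ}

theorem pd_t_expDiffusionTransform (hut : DifferentiableAt ℝ (fun s => u (s, -1 / y)) t)
    (hu : u (t, -1 / y) ≠ 0) :
    pd_t (expDiffusionTransform u) (t, y) = -y / u (t, -1 / y) * pd_t u (t, -1 / y) := by
  have hv : HasDerivAt (fun s => expDiffusionTransform u (s, y))
      (-y * (pd_t u (t, -1 / y) / u (t, -1 / y))) t :=
    ((hut.hasDerivAt.log hu).const_mul (-y)).sub_const (2 * y * (1 + Real.log (-1 / y)))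
  rw [pd_t, hv.deriv]
  ring

theorem pd_x_expDiffusionTransform (hy : y ≠ 0)
    (hux : DifferentiableAt ℝ (fun x => u (t, x)) (-1 / y)) (hu : u (t, -1 / y) ≠ 0) :
    pd_x (expDiffusionTransform u) (t, y) =
      elasticity u (t, -1 / y) + 2 - logProfile (fun x => u (t, x)) (-1 / y) := by
  have hx : -1 / y ≠ 0 := div_ne_zero (by norm_num) hy
  rw [pd_x, expDiffusionTransform_slice,
    (hasDerivAt_negInvTransform hy (hasDerivAt_logProfile hx hu hux.hasDerivAt)).deriv,
    elasticity, pd_x]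
  generalize -1 / y = x at hx hu ⊢
  field_simp

theorem pd_xx_expDiffusionTransform (hy : y ≠ 0)
    (hux : ∀ᶠ x in 𝓝 (-1 / y), DifferentiableAt ℝ (fun x => u (t, x)) x)
    (huxx : DifferentiableAt ℝ (deriv fun x => u (t, x)) (-1 / y)) (hu : u (t, -1 / y) ≠ 0) :
    pd_xx (expDiffusionTransform u) (t, y) =
      -1 / y * ((-1 / y) ^ 2 * pd_xx u (t, -1 / y) / u (t, -1 / y) -
        elasticity u (t, -1 / y) ^ 2 - 2) := by
  have hx : -1 / y ≠ 0 := div_ne_zero (by norm_num) hy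
  have hg := (eventually_hasDerivAt_logProfile hx hu hux).mono fun _ h => h.differentiableAt
  have hg' := hasDerivAt_deriv_logProfile hx hu hux huxx.hasDerivAt
  rw [pd_xx, expDiffusionTransform_slice, (hasDerivAt_deriv_negInvTransform hy hg hg').deriv,
    elasticity, pd_x, pd_xx]
  generalize -1 / y = x at hx hu ⊢
  field_simp

theorem exp_pd_x_expDiffusionTransform (hy : y ≠ 0)
    (hux : DifferentiableAt ℝ (fun x => u (t, x)) (-1 / y)) (hu : 0 < u (t, -1 / y)) :
    Real.exp (pd_x (expDiffusionTransform u) (t, y)) =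
      Real.exp (elasticity u (t, -1 / y)) / ((-1 / y) ^ 2 * u (t, -1 / y)) := by
  have hx : -1 / y ≠ 0 := div_ne_zero (by norm_num) hy
  rw [pd_x_expDiffusionTransform hy hux hu.ne', add_sub_assoc, Real.exp_add,
    exp_two_sub_logProfile hx hu, mul_one_div]

theorem exp_pd_x_mul_pd_xx_expDiffusionTransform (hy : y ≠ 0)
    (hux : ∀ᶠ x in 𝓝 (-1 / y), DifferentiableAt ℝ (fun x => u (t, x)) x)
    (huxx : DifferentiableAt ℝ (deriv fun x => u (t, x)) (-1 / y)) (hu : 0 < u (t, -1 / y)) :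
    Real.exp (pd_x (expDiffusionTransform u) (t, y)) * pd_xx (expDiffusionTransform u) (t, y) =
      -y / u (t, -1 / y) * elasticDiffusion u (t, -1 / y) := by
  rw [exp_pd_x_expDiffusionTransform hy hux.self_of_nhds hu,
    pd_xx_expDiffusionTransform hy hux huxx hu.ne', elasticDiffusion]
  generalize u (t, -1 / y) = w at hu ⊢
  field_simp
  ring

theorem change_of_variables_to_exp_diffusion_general (hy : y < 0) (hu : 0 < u (t, -1 / y))
    (hut : DifferentiableAt ℝ (fun s => u (s, -1 / y)) t)
    (hux : ∀ᶠ x in 𝓝 (-1 / y), DifferentiableAt ℝ (fun x => u (t, x)) x)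
    (huxx : DifferentiableAt ℝ (deriv fun x => u (t, x)) (-1 / y)) :
    pd_t (expDiffusionTransform u) (t, y) =
        Real.exp (pd_x (expDiffusionTransform u) (t, y)) *
          pd_xx (expDiffusionTransform u) (t, y) ↔
      pd_t u (t, -1 / y) = elasticDiffusion u (t, -1 / y) := by
  rw [pd_t_expDiffusionTransform hut hu.ne',
    exp_pd_x_mul_pd_xx_expDiffusionTransform hy.ne hux huxx hu,
    mul_right_inj' (div_pos (neg_pos.2 hy) hu).ne']

end ChangeOfVariables

/-- The change of variables `t̄ = t`, `x̄ = −x⁻¹`, `v = x⁻¹ln u + 2x⁻¹(1+ln x)`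
reduces `u_t = x²u⁻¹e^{ω}u_xx + (−2−ω²)e^{ω}` (with `ω = xu_x/u`) to
`v_t = e^{v_x}v_xx`. -/
theorem change_of_variables_to_exp_diffusion
    (Ω : Set (ℝ × ℝ)) (hΩ : IsOpen Ω) (hΩ' : Ω ⊆ {p : ℝ × ℝ | 0 < p.2})
    (u : ℝ × ℝ → ℝ) (hu : ContDiffOn ℝ 2 u Ω)
    (hupos : ∀ p ∈ Ω, 0 < u p)
    (heq : ∀ p ∈ Ω,
      pd_t u p =
        p.2 ^ 2 * (u p)⁻¹ * Real.exp (p.2 * pd_x u p / u p) * pd_xx u p +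
          (-2 - (p.2 * pd_x u p / u p) ^ 2) *
            Real.exp (p.2 * pd_x u p / u p)) :
    ∀ p : ℝ × ℝ, p.2 < 0 → (p.1, -1 / p.2) ∈ Ω →
      pd_t (fun q : ℝ × ℝ =>
          -q.2 * Real.log (u (q.1, -1 / q.2)) -
            2 * q.2 * (1 + Real.log (-1 / q.2))) p =
        Real.exp (pd_x (fun q : ℝ × ℝ =>
            -q.2 * Real.log (u (q.1, -1 / q.2)) -
              2 * q.2 * (1 + Real.log (-1 / q.2))) p) *
          pd_xx (fun q : ℝ × ℝ =>
            -q.2 * Real.log (u (q.1, -1 / q.2)) -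
              2 * q.2 * (1 + Real.log (-1 / q.2))) p := by
  rintro ⟨t, y⟩ hy hmem
  have hu2 : ContDiffAt ℝ 2 u (t, -1 / y) := hu.contDiffAt (hΩ.mem_nhds hmem)
  have hslice : ContDiffAt ℝ 2 (fun x => u (t, x)) (-1 / y) := hu2.comp (-1 / y) (by fun_prop)
  have hut : DifferentiableAt ℝ (fun s => u (s, -1 / y)) t :=
    (hu2.differentiableAt two_ne_zero).comp (f := fun s => (s, -1 / y)) t (by fun_prop)
  have hux : ∀ᶠ x in 𝓝 (-1 / y), DifferentiableAt ℝ (fun x => u (t, x)) x :=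
    (hslice.eventually (by simp)).mono fun _ h => h.differentiableAt two_ne_zero
  have huxx : DifferentiableAt ℝ (deriv fun x => u (t, x)) (-1 / y) :=
    (hslice.derivWithin (m := 1) (by norm_num)).differentiableAt one_ne_zero
  exact (change_of_variables_to_exp_diffusion_general hy (hupos _ hmem) hut hux huxx).2
    (heq _ hmem)
end

section
/- Let Ω ⊆ ℝ² be open, let u : Ω → ℝ be twice continuously differentiable with u_x never zero on Ω, and suppose u_t = (u_x)⁻²·u_xx + (u_x)⁻¹ at every point of Ω. Fix ε ∈ ℝ and let Ω' = {(t,x) : e^{−x} + ε > 0 and (t, −ln(e^{−x}+ε)) ∈ Ω}. Then the function v(t,x) = u(t, −ln(e^{−x}+ε)) has v_x never zero on Ω' and satisfies v_t = (v_x)⁻²·v_xx + (v_x)⁻¹ at every point of Ω'. (This realizes the flow of the symmetry generator eˣ∂x from the five-dimensional maximal invariance algebra A₃.₇² (q=2) ⊕ ⟨∂x, eˣ∂x⟩ of this equation.) -/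
/-!
The equation is a heat equation in disguise. Away from `u_x = 0` use `(t, u)` as independent
variables: the function `z = e^{-x}` of `(t, u)` satisfies `z_t = z_uu`. The map
`e^{-x} ↦ e^{-x} + ε` adds a constant solution of the heat equation, and it is the flow of `eˣ∂x`
up to the sign of the parameter. One need not invert `u` to see this symmetry: for
`u(t, x) = h(t, e^{-x})` the equation reads `h_t = h_z⁻² h_zz`, which is visibly invariant under
translations in `z`.
-/

open Real

/-- The right-hand side `f'⁻² f'' + f'⁻¹` of the equation, as an operator on functions of `x`. -/
noncomputable def diffusionOp (f : ℝ → ℝ) (x : ℝ) : ℝ :=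
  deriv f x ^ (-2 : ℤ) * deriv (deriv f) x + (deriv f x)⁻¹

/-- The translation by `ε` of the coordinate `e^{-x}`, read in the coordinate `x`. It is meaningful
where `0 < e^{-x} + ε`; elsewhere `Real.log` takes junk values. -/
noncomputable def expFlow (ε x : ℝ) : ℝ :=
  -log (exp (-x) + ε)

/-- At the point `p`, the function `u` is regular enough for the equation
`u_t = u_x⁻² u_xx + u_x⁻¹` to be meaningful, and satisfies it. Regularity is required separately
in `t` and in `x`. -/
structure IsSolutionAt_s16 (u : ℝ × ℝ → ℝ) (p : ℝ × ℝ) : Prop where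
  differentiableAt_t : DifferentiableAt ℝ (fun s => u (s, p.2)) p.1
  contDiffAt_x : ContDiffAt ℝ 2 (fun y => u (p.1, y)) p.2
  pd_x_ne_zero : pd_x u p ≠ 0
  pd_t_eq : pd_t u p = pd_x u p ^ (-2 : ℤ) * pd_xx u p + (pd_x u p)⁻¹

section ExponentialCoordinate

variable {h : ℝ → ℝ} {x : ℝ}

theorem hasDerivAt_exp_neg (x : ℝ) : HasDerivAt (fun y => exp (-y)) (-exp (-x)) x := by
  simpa using (hasDerivAt_neg x).exp

theorem deriv_comp_exp_neg (hh : DifferentiableAt ℝ h (exp (-x))) :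
    deriv (fun y => h (exp (-y))) x = -exp (-x) * deriv h (exp (-x)) := by
  rw [mul_comm]
  exact (hh.hasDerivAt.comp x (hasDerivAt_exp_neg x)).deriv

theorem deriv_deriv_comp_exp_neg (hh : ContDiffAt ℝ 2 h (exp (-x))) :
    deriv (deriv fun y => h (exp (-y))) x =
      exp (-x) ^ 2 * deriv (deriv h) (exp (-x)) + exp (-x) * deriv h (exp (-x)) := by
  have deriv_exp_neg : deriv (fun y => exp (-y)) = fun y => -exp (-y) :=
    funext fun y => (hasDerivAt_exp_neg y).deriv
  have deriv_deriv_exp_neg : deriv (fun y => -exp (-y)) x = exp (-x) := by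
    simpa using (hasDerivAt_exp_neg x).neg.deriv
  have chain_rule := iteratedDeriv_comp_two (f := fun y => exp (-y)) hh (by fun_prop)
  simp only [iteratedDeriv_succ, iteratedDeriv_zero, deriv_exp_neg, deriv_deriv_exp_neg]
    at chain_rule
  refine chain_rule.trans ?_
  ring

theorem diffusionOp_comp_exp_neg (hh : ContDiffAt ℝ 2 h (exp (-x)))
    (h_ne : deriv h (exp (-x)) ≠ 0) :
    diffusionOp (fun y => h (exp (-y))) x =
      deriv h (exp (-x)) ^ (-2 : ℤ) * deriv (deriv h) (exp (-x)) := by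
  have exp_ne : exp (-x) ≠ 0 := exp_ne_zero _
  rw [diffusionOp, deriv_comp_exp_neg (hh.differentiableAt two_ne_zero),
    deriv_deriv_comp_exp_neg hh]
  simp only [zpow_neg, zpow_ofNat]
  field_simp
  ring

end ExponentialCoordinate

section LogarithmicCoordinate

variable {f : ℝ → ℝ} {z : ℝ}

theorem contDiffAt_comp_neg_log {n : WithTop ℕ∞} (hz : z ≠ 0) (hf : ContDiffAt ℝ n f (-log z)) :
    ContDiffAt ℝ n (fun w => f (-log w)) z :=
  hf.comp z (contDiffAt_log.2 hz).neg

theorem deriv_comp_neg_log_ne_zero (hz : z ≠ 0) (hf' : deriv f (-log z) ≠ 0) :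
    deriv (fun w => f (-log w)) z ≠ 0 := by
  have hf := differentiableAt_of_deriv_ne_zero hf'
  have chain_rule : deriv (fun w => f (-log w)) z = deriv f (-log z) * -z⁻¹ :=
    (hf.hasDerivAt.comp z (hasDerivAt_log hz).neg).deriv
  rw [chain_rule]
  exact mul_ne_zero hf' (neg_ne_zero.2 (inv_ne_zero hz))

theorem diffusionOp_neg_log (hz : 0 < z) (hf : ContDiffAt ℝ 2 f (-log z))
    (hf' : deriv f (-log z) ≠ 0) :
    diffusionOp f (-log z) =
      deriv (fun w => f (-log w)) z ^ (-2 : ℤ) * deriv (deriv fun w => f (-log w)) z := by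
  have exp_neg_neg_log : exp (- -log z) = z := by rw [neg_neg, exp_log hz]
  have h_contDiff := contDiffAt_comp_neg_log hz.ne' hf
  have h_ne := deriv_comp_neg_log_ne_zero hz.ne' hf'
  rw [← exp_neg_neg_log] at h_contDiff h_ne
  simpa only [log_exp, neg_neg, exp_log hz] using diffusionOp_comp_exp_neg h_contDiff h_ne

end LogarithmicCoordinate

section Flow

variable {f : ℝ → ℝ} {ε x : ℝ}

theorem contDiffAt_expFlow {n : WithTop ℕ∞} (hpos : 0 < exp (-x) + ε) :
    ContDiffAt ℝ n (expFlow ε) x := by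
  have exp_contDiff : ContDiffAt ℝ n (fun y => exp (-y) + ε) x := by fun_prop
  exact (exp_contDiff.log hpos.ne').neg

theorem deriv_expFlow_ne_zero (hpos : 0 < exp (-x) + ε) : deriv (expFlow ε) x ≠ 0 := by
  have hasDerivAt_expFlow : HasDerivAt (expFlow ε) (-(-exp (-x) / (exp (-x) + ε))) x :=
    (((hasDerivAt_exp_neg x).add_const ε).log hpos.ne').neg
  rw [hasDerivAt_expFlow.deriv, neg_div, neg_neg]
  exact (div_pos (exp_pos _) hpos).ne'

theorem deriv_comp_expFlow_ne_zero (hpos : 0 < exp (-x) + ε)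
    (hf' : deriv f (expFlow ε x) ≠ 0) : deriv (fun y => f (expFlow ε y)) x ≠ 0 := by
  have flow_ne : deriv (expFlow ε) x ≠ 0 := deriv_expFlow_ne_zero hpos
  have chain_rule := deriv_comp x (differentiableAt_of_deriv_ne_zero hf')
    (differentiableAt_of_deriv_ne_zero flow_ne)
  exact chain_rule.trans_ne (mul_ne_zero hf' flow_ne)

theorem diffusionOp_comp_expFlow (hpos : 0 < exp (-x) + ε)
    (hf : ContDiffAt ℝ 2 f (expFlow ε x)) (hf' : deriv f (expFlow ε x) ≠ 0) :
    diffusionOp (fun y => f (expFlow ε y)) x = diffusionOp f (expFlow ε x) := by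
  let h : ℝ → ℝ := fun z => f (-log z)
  have h_contDiff : ContDiffAt ℝ 2 h (exp (-x) + ε) := contDiffAt_comp_neg_log hpos.ne' hf
  have h_ne : deriv h (exp (-x) + ε) ≠ 0 := deriv_comp_neg_log_ne_zero hpos.ne' hf'
  have translate_contDiff : ContDiffAt ℝ 2 (fun z => h (z + ε)) (exp (-x)) :=
    ContDiffAt.comp (g := h) (exp (-x)) h_contDiff (contDiffAt_id.add contDiffAt_const)
  have deriv_translate : deriv (fun z => h (z + ε)) = fun z => deriv h (z + ε) :=
    funext fun z => deriv_comp_add_const h ε z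
  calc diffusionOp (fun y => h (exp (-y) + ε)) x
      = deriv (fun z => h (z + ε)) (exp (-x)) ^ (-2 : ℤ) *
          deriv (deriv fun z => h (z + ε)) (exp (-x)) :=
        diffusionOp_comp_exp_neg translate_contDiff (by rwa [deriv_translate])
    _ = deriv h (exp (-x) + ε) ^ (-2 : ℤ) * deriv (deriv h) (exp (-x) + ε) := by
        rw [deriv_translate, deriv_comp_add_const]
    _ = diffusionOp f (expFlow ε x) := (diffusionOp_neg_log hpos hf hf').symm

end Flow

section Solution

variable {u : ℝ × ℝ → ℝ} {p : ℝ × ℝ}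

theorem isSolutionAt_of_contDiffAt (hu : ContDiffAt ℝ 2 u p) (hux : pd_x u p ≠ 0)
    (heq : pd_t u p = pd_x u p ^ (-2 : ℤ) * pd_xx u p + (pd_x u p)⁻¹) : IsSolutionAt_s16 u p where
  differentiableAt_t :=
    (hu.differentiableAt two_ne_zero).comp p.1
      (differentiableAt_id.prodMk (differentiableAt_const p.2))
  contDiffAt_x := hu.comp p.2 (contDiffAt_const.prodMk contDiffAt_id)
  pd_x_ne_zero := hux
  pd_t_eq := heq

theorem exp_flow_symmetry_general {ε : ℝ} (hpos : 0 < exp (-p.2) + ε)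
    (hu : IsSolutionAt_s16 u (p.1, expFlow ε p.2)) :
    IsSolutionAt_s16 (fun q => u (q.1, expFlow ε q.2)) p where
  differentiableAt_t := hu.differentiableAt_t
  contDiffAt_x := ContDiffAt.comp (g := fun y => u (p.1, y)) p.2 hu.contDiffAt_x
    (contDiffAt_expFlow hpos)
  pd_x_ne_zero := deriv_comp_expFlow_ne_zero hpos hu.pd_x_ne_zero
  pd_t_eq := hu.pd_t_eq.trans
    (diffusionOp_comp_expFlow hpos hu.contDiffAt_x hu.pd_x_ne_zero).symm

end Solution

/-- The flow of the symmetry generator `eˣ∂x` of `u_t = u_x⁻²u_xx + u_x⁻¹`: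
if `u` solves the equation on `Ω` then `v(t,x) = u(t, −ln(e^{−x}+ε))`
solves it on `Ω'`. -/
theorem exp_flow_symmetry
    (Ω : Set (ℝ × ℝ)) (hΩ : IsOpen Ω)
    (u : ℝ × ℝ → ℝ) (hu : ContDiffOn ℝ 2 u Ω)
    (hux : ∀ p ∈ Ω, pd_x u p ≠ 0)
    (heq : ∀ p ∈ Ω,
      pd_t u p = (pd_x u p) ^ (-2 : ℤ) * pd_xx u p + (pd_x u p)⁻¹)
    (ε : ℝ) :
    ∀ p : ℝ × ℝ, 0 < Real.exp (-p.2) + ε →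
      (p.1, -Real.log (Real.exp (-p.2) + ε)) ∈ Ω →
      pd_x (fun q : ℝ × ℝ =>
          u (q.1, -Real.log (Real.exp (-q.2) + ε))) p ≠ 0 ∧
      pd_t (fun q : ℝ × ℝ =>
          u (q.1, -Real.log (Real.exp (-q.2) + ε))) p =
        (pd_x (fun q : ℝ × ℝ =>
            u (q.1, -Real.log (Real.exp (-q.2) + ε))) p) ^ (-2 : ℤ) *
          pd_xx (fun q : ℝ × ℝ =>
            u (q.1, -Real.log (Real.exp (-q.2) + ε))) p +
        (pd_x (fun q : ℝ × ℝ =>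
            u (q.1, -Real.log (Real.exp (-q.2) + ε))) p)⁻¹ := by
  intro p hpos hp
  have solution := exp_flow_symmetry_general hpos <|
    isSolutionAt_of_contDiffAt (hu.contDiffAt (hΩ.mem_nhds hp)) (hux _ hp) (heq _ hp)
  exact ⟨solution.pd_x_ne_zero, solution.pd_t_eq⟩
end

section
/- Let u : ℝ × (0,∞) → ℝ be twice continuously differentiable satisfying u_t = u_xx + x⁻¹·u·u_x − x⁻²·u² − 2x⁻²·u at every (t,x) with x > 0. Fix ε ∈ ℝ. Then the function v(t,x) = x·(u(t, x−ε) + 2)/(x−ε) − 2 satisfies v_t = v_xx + x⁻¹·v·v_x − x⁻²·v² − 2x⁻²·v at every (t,x) with x > 0 and x − ε > 0. (This realizes the flow of the symmetry generator ∂x + x⁻¹(u+2)∂u from the solvable radical L₂.₂ of the maximal invariance algebra sl(2,ℝ) ⋉ L₂.₂ of this equation.) -/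
/-!
Writing `u = x w - 2` turns `u_t = u_xx + x⁻¹ u u_x - x⁻² u² - 2 x⁻² u` into the Burgers equation
`w_t = w_xx + w w_x`, whose coefficients do not depend on `x`. In terms of `w = (u + 2) / x` the
transformation `u ↦ v` is the translation `w (t, x) ↦ w (t, x - ε)`, so it preserves solutions.
-/

open Filter Topology

/-- The equation `u_t = u_xx + x⁻¹ u u_x - x⁻² u² - 2 x⁻² u` at the single point `p = (t, x)`.
Regularity of `u` is not part of the definition. -/
def SolvesAt (u : ℝ × ℝ → ℝ) (p : ℝ × ℝ) : Prop :=
  pd_t u p = pd_xx u p + p.2⁻¹ * u p * pd_x u p -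
    p.2 ^ (-2 : ℤ) * (u p) ^ 2 - 2 * p.2 ^ (-2 : ℤ) * u p

/-- The Burgers equation `w_t = w_xx + w w_x` at the single point `p`, to which `SolvesAt` reduces.
Regularity of `w` is not part of the definition. -/
def SolvesBurgersAt (w : ℝ × ℝ → ℝ) (p : ℝ × ℝ) : Prop :=
  pd_t w p = pd_xx w p + w p * pd_x w p

/-- The pointwise form of the class `C^{1,2}` of classical solutions of a parabolic equation:
`u_t`, `u_x` and `u_xx` exist at `p`, so that `pd_t`, `pd_x` and `pd_xx` are not junk there. -/
structure ParabolicRegularAt (u : ℝ × ℝ → ℝ) (p : ℝ × ℝ) : Prop where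
  time : DifferentiableAt ℝ (fun s => u (s, p.2)) p.1
  space : ContDiffAt ℝ 2 (fun y => u (p.1, y)) p.2

/-- The action on functions of the flow, at time `ε`, of the vector field `∂x + x⁻¹ (u + 2) ∂u`. -/
noncomputable def translationFlow (ε : ℝ) (u : ℝ × ℝ → ℝ) (q : ℝ × ℝ) : ℝ :=
  q.2 * (u (q.1, q.2 - ε) + 2) / (q.2 - ε) - 2

lemma parabolicRegularAt_of_contDiffAt {u : ℝ × ℝ → ℝ} {p : ℝ × ℝ} (hu : ContDiffAt ℝ 2 u p) :
    ParabolicRegularAt u p where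
  time := (hu.comp p.1 (contDiff_prodMk_left p.2).contDiffAt).differentiableAt two_ne_zero
  space := hu.comp p.2 (contDiff_prodMk_right p.1).contDiffAt

section PartialDerivatives

variable {u v : ℝ × ℝ → ℝ} {p : ℝ × ℝ}

lemma pd_t_congr (h : u =ᶠ[𝓝 p] v) : pd_t u p = pd_t v p :=
  (h.comp_tendsto (Continuous.prodMk_left p.2).continuousAt).deriv_eq

lemma pd_x_congr (h : u =ᶠ[𝓝 p] v) : pd_x u p = pd_x v p :=
  (h.comp_tendsto (Continuous.prodMk_right p.1).continuousAt).deriv_eq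

lemma pd_xx_congr (h : u =ᶠ[𝓝 p] v) : pd_xx u p = pd_xx v p :=
  (h.comp_tendsto (Continuous.prodMk_right p.1).continuousAt).deriv.deriv_eq

lemma pd_x_comp_sub (u : ℝ × ℝ → ℝ) (ε : ℝ) (p : ℝ × ℝ) :
    pd_x (fun q => u (q.1, q.2 - ε)) p = pd_x u (p.1, p.2 - ε) :=
  deriv_comp_sub_const (fun y => u (p.1, y)) ε p.2

lemma pd_xx_comp_sub (u : ℝ × ℝ → ℝ) (ε : ℝ) (p : ℝ × ℝ) :
    pd_xx (fun q => u (q.1, q.2 - ε)) p = pd_xx u (p.1, p.2 - ε) := by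
  simpa only [pd_xx, iteratedDeriv_succ, iteratedDeriv_zero] using
    congrFun (iteratedDeriv_comp_sub_const 2 (fun y => u (p.1, y)) ε) p.2

end PartialDerivatives

lemma deriv_deriv_id_mul {𝕜 : Type*} [NontriviallyNormedField 𝕜] {f : 𝕜 → 𝕜} {x : 𝕜}
    (hf : ContDiffAt 𝕜 2 f x) :
    deriv (deriv fun y => y * f y) x = 2 * deriv f x + x * deriv (deriv f) x := by
  simpa [Finset.sum_range_succ, iteratedDeriv_succ, add_comm] using
    iteratedDeriv_fun_mul (n := 2) contDiffAt_id hf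

section Burgers

variable {w : ℝ × ℝ → ℝ} {p : ℝ × ℝ}

lemma pd_t_snd_mul_sub_two (w : ℝ × ℝ → ℝ) (p : ℝ × ℝ) :
    pd_t (fun q => q.2 * w q - 2) p = p.2 * pd_t w p := by
  simp only [pd_t, deriv_sub_const, deriv_const_mul_field]

lemma pd_x_snd_mul_sub_two (hw : DifferentiableAt ℝ (fun y => w (p.1, y)) p.2) :
    pd_x (fun q => q.2 * w q - 2) p = w p + p.2 * pd_x w p := by
  simp only [pd_x, deriv_sub_const, deriv_fun_mul differentiableAt_fun_id hw, deriv_id'', one_mul]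

lemma pd_xx_snd_mul_sub_two (hw : ContDiffAt ℝ 2 (fun y => w (p.1, y)) p.2) :
    pd_xx (fun q => q.2 * w q - 2) p = 2 * pd_x w p + p.2 * pd_xx w p := by
  simpa only [pd_xx, pd_x, deriv_sub_const_fun] using deriv_deriv_id_mul hw

lemma solvesAt_iff_solvesBurgersAt {u : ℝ × ℝ → ℝ} (hp : p.2 ≠ 0)
    (hw : ContDiffAt ℝ 2 (fun y => w (p.1, y)) p.2) (huw : u =ᶠ[𝓝 p] fun q => q.2 * w q - 2) :
    SolvesAt u p ↔ SolvesBurgersAt w p := by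
  have huw_p : u p = p.2 * w p - 2 := huw.eq_of_nhds
  have rhs_eq : pd_xx u p + p.2⁻¹ * u p * pd_x u p -
      p.2 ^ (-2 : ℤ) * (u p) ^ 2 - 2 * p.2 ^ (-2 : ℤ) * u p =
        p.2 * (pd_xx w p + w p * pd_x w p) := by
    rw [pd_xx_congr huw, pd_x_congr huw, huw_p, pd_xx_snd_mul_sub_two hw,
      pd_x_snd_mul_sub_two (hw.differentiableAt two_ne_zero), zpow_neg, zpow_ofNat]
    field_simp
    ring
  rw [SolvesAt, rhs_eq, pd_t_congr huw, pd_t_snd_mul_sub_two, mul_right_inj' hp, SolvesBurgersAt]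

lemma solvesBurgersAt_comp_sub_iff {ε : ℝ} :
    SolvesBurgersAt (fun q => w (q.1, q.2 - ε)) p ↔ SolvesBurgersAt w (p.1, p.2 - ε) := by
  rw [SolvesBurgersAt, SolvesBurgersAt, pd_x_comp_sub, pd_xx_comp_sub]
  rfl

end Burgers

theorem translation_flow_symmetry_sl2_L22_first_general {u : ℝ × ℝ → ℝ} {ε : ℝ} {p : ℝ × ℝ}
    (hp : p.2 ≠ 0) (hpε : p.2 - ε ≠ 0) (hu : ParabolicRegularAt u (p.1, p.2 - ε))
    (heq : SolvesAt u (p.1, p.2 - ε)) : SolvesAt (translationFlow ε u) p := by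
  let w : ℝ × ℝ → ℝ := fun q => (u q + 2) / q.2
  have hw : ContDiffAt ℝ 2 (fun y => w (p.1, y)) (p.2 - ε) :=
    (hu.space.add contDiffAt_const).div contDiffAt_id hpε
  have hw_shift : ContDiffAt ℝ 2 (fun y => w (p.1, y - ε)) p.2 :=
    hw.comp p.2 (contDiffAt_id.sub contDiffAt_const)
  have u_eq : u =ᶠ[𝓝 (p.1, p.2 - ε)] fun q => q.2 * w q - 2 := by
    filter_upwards [continuousAt_snd.eventually_ne hpε] with q hq
    rw [mul_div_cancel₀ _ hq, add_sub_cancel_right]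
  have flow_eq : translationFlow ε u = fun q => q.2 * w (q.1, q.2 - ε) - 2 :=
    funext fun q => by rw [translationFlow, mul_div_assoc]
  have burgers : SolvesBurgersAt w (p.1, p.2 - ε) :=
    (solvesAt_iff_solvesBurgersAt hpε hw u_eq).mp heq
  exact (solvesAt_iff_solvesBurgersAt hp hw_shift flow_eq.eventuallyEq).mpr
    (solvesBurgersAt_comp_sub_iff.mpr burgers)

/-- The flow of the symmetry generator `∂x + x⁻¹(u+2)∂u` of
`u_t = u_xx + x⁻¹uu_x − x⁻²u² − 2x⁻²u`: if `u` is a solution for `x > 0`, then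
`v(t,x) = x·(u(t,x−ε)+2)/(x−ε) − 2` is a solution for `x > 0`, `x − ε > 0`. -/
theorem translation_flow_symmetry_sl2_L22_first
    (u : ℝ × ℝ → ℝ) (hu : ContDiffOn ℝ 2 u {p : ℝ × ℝ | 0 < p.2})
    (heq : ∀ p : ℝ × ℝ, 0 < p.2 →
      pd_t u p = pd_xx u p + p.2⁻¹ * u p * pd_x u p -
        p.2 ^ (-2 : ℤ) * (u p) ^ 2 - 2 * p.2 ^ (-2 : ℤ) * u p)
    (ε : ℝ) :
    ∀ p : ℝ × ℝ, 0 < p.2 → 0 < p.2 - ε →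
      pd_t (fun q : ℝ × ℝ =>
          q.2 * (u (q.1, q.2 - ε) + 2) / (q.2 - ε) - 2) p =
        pd_xx (fun q : ℝ × ℝ =>
          q.2 * (u (q.1, q.2 - ε) + 2) / (q.2 - ε) - 2) p +
        p.2⁻¹ * ((fun q : ℝ × ℝ =>
            q.2 * (u (q.1, q.2 - ε) + 2) / (q.2 - ε) - 2) p) *
          pd_x (fun q : ℝ × ℝ =>
            q.2 * (u (q.1, q.2 - ε) + 2) / (q.2 - ε) - 2) p -
        p.2 ^ (-2 : ℤ) * ((fun q : ℝ × ℝ =>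
            q.2 * (u (q.1, q.2 - ε) + 2) / (q.2 - ε) - 2) p) ^ 2 -
        2 * p.2 ^ (-2 : ℤ) * ((fun q : ℝ × ℝ =>
            q.2 * (u (q.1, q.2 - ε) + 2) / (q.2 - ε) - 2) p) :=
  fun _ hp hpε => translation_flow_symmetry_sl2_L22_first_general hp.ne' hpε.ne'
    (parabolicRegularAt_of_contDiffAt
      (hu.contDiffAt ((isOpen_Ioi.preimage continuous_snd).mem_nhds hpε))) (heq _ hpε)
end

section
/- Let λ ≠ 0 and γ be real constants, and let u : ℝ × (0,∞) → ℝ be twice continuously differentiable satisfying u_t = λ·(2u − x·u_x)·u_xx + (4γ − 4λ − 1)·x⁻²·u² + (1 + 2λ − 4γ)·x⁻¹·u·u_x + γ·(u_x)² at every (t,x) with x > 0. Then for every μ > 0, the function v(t,x) = μ²·u(t, x/μ) satisfies the same equation, v_t = λ·(2v − x·v_x)·v_xx + (4γ − 4λ − 1)·x⁻²·v² + (1 + 2λ − 4γ)·x⁻¹·v·v_x + γ·(v_x)², at every (t,x) with x > 0. (This realizes the symmetry x∂x + 2u∂u, which extends the sl(2,ℝ) invariance algebra of this equation to the four-dimensional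 algebra sl(2,ℝ) ⊕ ⟨x∂x + 2u∂u⟩.) -/
/-!
The chain rule multiplies the derivatives `u_t`, `u_x`, `u_xx` of `c·u(t, x/μ)` by `c`, `c/μ`,
`c/μ²`. An evolution equation `u_t = F(x, u, u_x, u_xx)` is therefore preserved as soon as
`F(μx, ca, (c/μ)b, (c/μ²)r) = c·F(x, a, b, r)`; for the equation at hand every monomial of the
right-hand side has this property with `c = μ²`.
-/

theorem deriv_const_mul_comp_div {𝕜 : Type*} [NontriviallyNormedField 𝕜] (c μ : 𝕜) (f : 𝕜 → 𝕜) :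
    deriv (fun y => c * f (y / μ)) = fun y => c / μ * deriv f (y / μ) := by
  funext y
  simp only [div_eq_inv_mul]
  rw [deriv_const_mul_field, deriv_comp_mul_left, smul_eq_mul]
  ring

/-- The function `(t, x) ↦ c·u(t, x/μ)`, the image of `u` under the scaling
`(t, x, u) ↦ (t, μx, cu)`. -/
noncomputable def rescale (c μ : ℝ) (u : ℝ × ℝ → ℝ) : ℝ × ℝ → ℝ :=
  fun q => c * u (q.1, q.2 / μ)

section rescale

variable (c μ : ℝ) (u : ℝ × ℝ → ℝ) (p : ℝ × ℝ)

theorem pd_t_rescale : pd_t (rescale c μ u) p = c * pd_t u (p.1, p.2 / μ) :=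
  deriv_const_mul_field c

theorem pd_x_rescale : pd_x (rescale c μ u) p = c / μ * pd_x u (p.1, p.2 / μ) :=
  congrFun (deriv_const_mul_comp_div c μ fun y => u (p.1, y)) p.2

theorem pd_xx_rescale : pd_xx (rescale c μ u) p = c / μ ^ 2 * pd_xx u (p.1, p.2 / μ) := by
  simp only [pd_xx, rescale]
  rw [deriv_const_mul_comp_div c μ fun y => u (p.1, y), deriv_const_mul_comp_div, div_div, sq]

end rescale

/-- `u` satisfies the evolution equation `u_t = F(x, u, u_x, u_xx)` at every point `(t, x)` of `s`.
The partial derivatives are those of `pd_t`, `pd_x`, `pd_xx`, with value `0` where they do not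
exist. -/
def SolvesOn (F : ℝ → ℝ → ℝ → ℝ → ℝ) (s : Set (ℝ × ℝ)) (u : ℝ × ℝ → ℝ) : Prop :=
  ∀ p ∈ s, pd_t u p = F p.2 (u p) (pd_x u p) (pd_xx u p)

/-- Equivariance of the right-hand side `F(x, u, u_x, u_xx)` of an evolution equation under the
scaling `(x, u) ↦ (μx, cu)`, prolonged to `(u_x, u_xx) ↦ ((c/μ)u_x, (c/μ²)u_xx)`. -/
def IsScalingEquivariant (c μ : ℝ) (F : ℝ → ℝ → ℝ → ℝ → ℝ) : Prop :=
  ∀ x a b r, F (μ * x) (c * a) (c / μ * b) (c / μ ^ 2 * r) = c * F x a b r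

theorem scaling_symmetry_sl2_extension_general {c μ : ℝ} (hμ : μ ≠ 0)
    {F : ℝ → ℝ → ℝ → ℝ → ℝ} (hF : IsScalingEquivariant c μ F)
    {s : Set (ℝ × ℝ)} {u : ℝ × ℝ → ℝ} (hu : SolvesOn F s u) :
    SolvesOn F {p | (p.1, p.2 / μ) ∈ s} (rescale c μ u) := by
  intro p hp
  let q : ℝ × ℝ := (p.1, p.2 / μ)
  calc pd_t (rescale c μ u) p
      = c * pd_t u q := pd_t_rescale c μ u p
    _ = c * F q.2 (u q) (pd_x u q) (pd_xx u q) := by rw [hu q hp]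
    _ = F (μ * q.2) (c * u q) (c / μ * pd_x u q) (c / μ ^ 2 * pd_xx u q) := (hF _ _ _ _).symm
    _ = F p.2 (rescale c μ u p) (pd_x (rescale c μ u) p) (pd_xx (rescale c μ u) p) := by
      rw [pd_x_rescale, pd_xx_rescale, mul_div_cancel₀ p.2 hμ, rescale]

/-- The right-hand side of the equation with parameters `lam = λ` and `γ`, as a function of
`x`, `a = u`, `b = u_x` and `r = u_xx`. -/
noncomputable def sl2RHS (lam γ x a b r : ℝ) : ℝ :=
  lam * (2 * a - x * b) * r + (4 * γ - 4 * lam - 1) * x ^ (-2 : ℤ) * a ^ 2 +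
    (1 + 2 * lam - 4 * γ) * x⁻¹ * a * b + γ * b ^ 2

theorem isScalingEquivariant_sl2RHS (lam γ : ℝ) {μ : ℝ} (hμ : μ ≠ 0) :
    IsScalingEquivariant (μ ^ 2) μ (sl2RHS lam γ) := by
  intro x a b r
  have hb : μ ^ 2 / μ = μ := by rw [sq, mul_self_div_self]
  have hr : μ ^ 2 / μ ^ 2 = 1 := div_self (pow_ne_zero 2 hμ)
  simp only [sl2RHS, hb, hr, mul_inv, zpow_neg, zpow_ofNat]
  field_simp

/-- The symmetry `x∂x + 2u∂u` of
`u_t = λ(2u − xu_x)u_xx + (4γ−4λ−1)x⁻²u² + (1+2λ−4γ)x⁻¹uu_x + γu_x²`: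
if `u` is a solution for `x > 0`, then so is `v(t,x) = μ²·u(t, x/μ)`
for every `μ > 0`. -/
theorem scaling_symmetry_sl2_extension
    (lam γ : ℝ) (hlam : lam ≠ 0)
    (u : ℝ × ℝ → ℝ) (hu : ContDiffOn ℝ 2 u {p : ℝ × ℝ | 0 < p.2})
    (heq : ∀ p : ℝ × ℝ, 0 < p.2 →
      pd_t u p = lam * (2 * u p - p.2 * pd_x u p) * pd_xx u p +
        (4 * γ - 4 * lam - 1) * p.2 ^ (-2 : ℤ) * (u p) ^ 2 +
        (1 + 2 * lam - 4 * γ) * p.2⁻¹ * u p * pd_x u p +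
        γ * (pd_x u p) ^ 2)
    (μ : ℝ) (hμ : 0 < μ) :
    ∀ p : ℝ × ℝ, 0 < p.2 →
      pd_t (fun q : ℝ × ℝ => μ ^ 2 * u (q.1, q.2 / μ)) p =
        lam * (2 * ((fun q : ℝ × ℝ => μ ^ 2 * u (q.1, q.2 / μ)) p) -
            p.2 * pd_x (fun q : ℝ × ℝ => μ ^ 2 * u (q.1, q.2 / μ)) p) *
          pd_xx (fun q : ℝ × ℝ => μ ^ 2 * u (q.1, q.2 / μ)) p +
        (4 * γ - 4 * lam - 1) * p.2 ^ (-2 : ℤ) *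
          ((fun q : ℝ × ℝ => μ ^ 2 * u (q.1, q.2 / μ)) p) ^ 2 +
        (1 + 2 * lam - 4 * γ) * p.2⁻¹ *
          ((fun q : ℝ × ℝ => μ ^ 2 * u (q.1, q.2 / μ)) p) *
          pd_x (fun q : ℝ × ℝ => μ ^ 2 * u (q.1, q.2 / μ)) p +
        γ * (pd_x (fun q : ℝ × ℝ => μ ^ 2 * u (q.1, q.2 / μ)) p) ^ 2 :=
  fun p hp => scaling_symmetry_sl2_extension_general (s := {p | 0 < p.2}) hμ.ne'
    (isScalingEquivariant_sl2RHS lam γ hμ.ne') heq p (div_pos hp hμ)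
end
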